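/- Let G_K be the set of pairs (J, u), where J is a fractional ideal of K and u ∈ F^× is a generator of N_{K/F}(J), modulo the equivalence relation (J, u) ∼ ((α)J, α·c(α)·u) for all α ∈ K^×. Then #G_K ≤ 2^{d+1} · h⁻(K). -/

import Mathlib

/-!
Sending the class of a pair `(J, u)` to the ideal class of `J`, and, relative to a fixed base pair
in each ideal class, to the unit of `F` by which the generators differ, embeds `G_K` into
`ker (N : Cl K → Cl F) × E / E²`, where `E` is the unit group of `F`: if two units agree up to the
square of `η`, then scaling by `η` identifies the pairs, since `η · c(η) = η²` and `(η)J = J`. By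
Dirichlet's unit theorem `|E / E²| ≤ 2 ^ d` (`units_index_squares_le`), so it remains to see that
the norm on class groups has image of index at most `2` (`index_range_classNorm_le`); then its
kernel has order at most `2 h(K) / h(F)`.

The index bound replaces class field theory by an argument with `L`-series. The image of the norm
contains all squares, so if its index were larger than `2`, there would be quadratic characters
`χ₁`, `χ₂` of `Cl F`, trivial on norms, with `χ₁`, `χ₂` and `χ₁χ₂` all nontrivial
(`exists_quadratic_characters`). Comparing Euler factors prime by prime gives, for `s > 1`,
`ζ_K(s)² ≤ ζ_F(s) L(s, χ₁) L(s, χ₂) L(s, χ₁χ₂)` (`sq_tsum_normPow_le`): a prime of `F` below a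
prime of residue degree one is a norm, so both characters are `1` there, and otherwise there is at
most one prime above, of degree two. As `s → 1` the left side has a double pole and the right side
at most a simple one, a contradiction.

This uses that `L(s, χ)` stays bounded as `s → 1` for `χ ≠ 1` (`exists_abs_tsum_charPow_le`), which
follows once the partial zeta functions of any two ideal classes differ by a bounded amount on
`(1, 2]` (`partialZeta_le`). For this, following Hecke, `|N x| ^ (-s)` is written as an integral
over the logarithmic space of powers of gauges `max_w y_w |x|_w` on the mixed space. The sum over
the units then unfolds, and the partial zeta function becomes an integral over a bounded
fundamental domain of sums over an ideal lattice of homogeneous functions of degree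
`-s [L : ℚ]`. Each such sum differs from the corresponding integral by an amount that is bounded
uniformly in `s` and in the gauge (`lattice_sum_bound`), and after normalizing by the norm of the
ideal the integral is the same for all ideal classes.
-/

open NumberField

variable (F K : Type) [Field F] [NumberField F] [Field K] [NumberField K] [Algebra F K]

/-- The fractional ideal `N_{K/F}(I)` of `F`, realized as the `𝓞 F`-submodule of `F`
generated by the elements `β * c β` for `β ∈ I`. -/
noncomputable def normSpan (c : K ≃ₐ[F] K) (I : FractionalIdeal (nonZeroDivisors (𝓞 K)) K) :
    Submodule (𝓞 F) F :=
  Submodule.span (𝓞 F) {x : F | ∃ β ∈ (I : Submodule (𝓞 K) K), algebraMap F K x = β * c β}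

/-- The set of pairs `(J, u)` of a fractional ideal `J` of `K` together with a generator
`u ∈ F^×` of the fractional ideal `N_{K/F}(J)` of `F`. -/
noncomputable def pairSet (c : K ≃ₐ[F] K) :
    Set (FractionalIdeal (nonZeroDivisors (𝓞 K)) K × Fˣ) :=
  {p | normSpan F K c p.1 = Submodule.span (𝓞 F) {((p.2 : F))}}

/-- The equivalence relation `(J, u) ∼ ((α)J, α·c(α)·u)` on pairs. -/
noncomputable def pairRel (c : K ≃ₐ[F] K)
    (p q : FractionalIdeal (nonZeroDivisors (𝓞 K)) K × Fˣ) : Prop :=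
  ∃ α : Kˣ, q.1 = FractionalIdeal.spanSingleton (nonZeroDivisors (𝓞 K)) (α : K) * p.1 ∧
    algebraMap F K ((q.2 : F)) = (α : K) * c (α : K) * algebraMap F K ((p.2 : F))

/-! ### Lattice sums and integrals -/

open MeasureTheory Module in
/-- Mean value estimate for `x ↦ x ^ (-q)`, with a constant that is uniform for `n < q ≤ 2 * n` and in
terms of a common lower bound `m` of the two points. -/
lemma rpow_neg_sub_le {u v m q : ℝ} {n : ℕ} (hm : 0 < m) (hmu : m ≤ u) (hmv : m ≤ v) (hu : 1 ≤ u)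
    (hv : 1 ≤ v) (hq : (n : ℝ) < q) (hq2 : q ≤ 2 * n) :
    |u ^ (-q) - v ^ (-q)| ≤ 2 * n * |u - v| * m ^ (-((n : ℝ) + 1)) := by
  have hn : (0 : ℝ) ≤ n := Nat.cast_nonneg n
  wlog h : u ≤ v generalizing u v
  · rw [abs_sub_comm, abs_sub_comm u v]
    exact this hmv hmu hv hu (le_of_not_ge h)
  have hu0 : 0 < u := by linarith
  have hv0 : 0 < v := by linarith
  have key : ∀ x ∈ Set.Icc u v, ‖-q * x ^ (-q - 1)‖ ≤ 2 * n * m ^ (-((n : ℝ) + 1)) := by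
    intro x hx
    have hx0 : 0 < x := hu0.trans_le hx.1
    rw [norm_mul, norm_neg, Real.norm_of_nonneg (by linarith : 0 ≤ q),
      Real.norm_of_nonneg (by positivity)]
    refine mul_le_mul hq2 ?_ (by positivity) (by positivity)
    calc x ^ (-q - 1) ≤ x ^ (-((n : ℝ) + 1)) :=
          Real.rpow_le_rpow_of_exponent_le (hu.trans hx.1) (by linarith)
      _ ≤ m ^ (-((n : ℝ) + 1)) :=
          Real.rpow_le_rpow_of_nonpos hm (hmu.trans hx.1) (by linarith)
  have := (convex_Icc u v).norm_image_sub_le_of_norm_hasDerivWithin_le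
    (f := fun x : ℝ => x ^ (-q)) (f' := fun x => -q * x ^ (-q - 1))
    (fun x hx => (Real.hasDerivAt_rpow_const
      (Or.inl (hu0.trans_le hx.1).ne')).hasDerivWithinAt) key (Set.right_mem_Icc.2 h)
      (Set.left_mem_Icc.2 h)
  rw [Real.norm_eq_abs, Real.norm_eq_abs] at this
  linarith

open MeasureTheory Module in
/-- Comparison of a lattice sum with the corresponding integral, cell by cell. The point is the
uniformity: the error `B` is the same for all Lipschitz gauges `φ` with the given constants and all
exponents `q` in `(n, 2 * n]`, although both quantities blow up as `q → n`. -/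
lemma lattice_sum_bound {E : Type*} [NormedAddCommGroup E] [NormedSpace ℝ E]
    [FiniteDimensional ℝ E] [MeasurableSpace E] [BorelSpace E] (μ : Measure E)
    [μ.IsAddHaarMeasure] (L : Submodule ℤ E) [DiscreteTopology L] [IsZLattice ℝ L]
    {a A : ℝ} (ha : 0 < a) (hA : 0 ≤ A) :
    ∃ B : ℝ, ∀ φ : E → ℝ, (∀ x, a * ‖x‖ ≤ φ x) → (∀ x y, |φ x - φ y| ≤ A * ‖x - y‖) →
      ∀ q : ℝ, (finrank ℝ E : ℝ) < q → q ≤ 2 * finrank ℝ E →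
        Integrable (fun x => (max (φ x) 1) ^ (-q)) μ ∧
        Summable (fun x : L => (max (φ x) 1) ^ (-q)) ∧
        |ZLattice.covolume L μ * ∑' x : L, (max (φ x) 1) ^ (-q)
          - ∫ x, (max (φ x) 1) ^ (-q) ∂μ| ≤ B := by
  set n := finrank ℝ E with hn
  set b := (Free.chooseBasis ℤ L) with hb
  set P := ZSpan.fundamentalDomain (b.ofZLatticeBasis ℝ) with hP
  have hFD : IsAddFundamentalDomain L P μ := ZLattice.isAddFundamentalDomain b μ
  have hPb : Bornology.IsBounded P := ZSpan.fundamentalDomain_isBounded _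
  have hPfin : μ P < ⊤ := hPb.measure_lt_top
  obtain ⟨R, hR0, hR⟩ : ∃ R : ℝ, 0 ≤ R ∧ ∀ z ∈ P, ‖z‖ ≤ R := by
    obtain ⟨R, hR⟩ := hPb.exists_norm_le
    exact ⟨max R 0, le_max_right _ _, fun z hz => (hR z hz).trans (le_max_left _ _)⟩
  have hcov : ZLattice.covolume L μ = μ.real P :=
    ZLattice.covolume_eq_measure_fundamentalDomain L μ hFD
  set c := a / (1 + a + a * R) with hc
  have hc0 : 0 < c := by positivity
  -- both `1` and `a (t - R)` are at most the maximum, hence so is a convex combination of them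
  have hmin : ∀ t : ℝ, ∀ w : ℝ, a * (t - R) ≤ w → 1 ≤ w → c * (1 + t) ≤ w := by
    intro t w h1 h2
    rw [hc, div_mul_eq_mul_div, div_le_iff₀ (by positivity)]
    nlinarith [mul_nonneg ha.le hR0]
  have hsum : ∀ r : ℝ, (n : ℝ) < r → Summable (fun x : L => (c * (1 + ‖x‖)) ^ (-r)) := by
    intro r hr
    have h1 : Summable fun z : L ↦ ‖z‖ ^ (-r) := by
      apply ZLattice.summable_norm_rpow
      rw [ZLattice.rank ℝ L]
      linarith
    have h2 : Summable (fun x : L => (1 + ‖x‖) ^ (-r)) := by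
      refine Summable.of_norm_bounded_eventually h1 ?_
      rw [Filter.eventually_cofinite]
      refine (Set.finite_singleton (0 : L)).subset ?_
      intro x hx
      by_contra hne
      apply hx
      have : 0 < ‖x‖ := norm_pos_iff.2 hne
      rw [Real.norm_of_nonneg (by positivity)]
      exact Real.rpow_le_rpow_of_nonpos this (by linarith) (by linarith [Nat.cast_nonneg (α := ℝ) n])
    refine (h2.mul_left (c ^ (-r))).congr fun x => ?_
    rw [Real.mul_rpow hc0.le (by positivity)]
  refine ⟨μ.real P * (2 * n * (A * R)) * ∑' x : L, (c * (1 + ‖x‖)) ^ (-((n : ℝ) + 1)), ?_⟩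
  intro φ hφ1 hφ2 q hq hq2
  have hcont : Continuous φ := by
    have : LipschitzWith ⟨A, hA⟩ φ := LipschitzWith.of_dist_le_mul fun x y => by
      rw [Real.dist_eq, dist_eq_norm]; exact hφ2 x y
    exact this.continuous
  have hg1 : ∀ x, (1 : ℝ) ≤ max (φ x) 1 := fun x => le_max_right _ _
  have hg2 : ∀ x, c * (1 + ‖x‖) ≤ max (φ x) 1 := fun x => by
    refine hmin _ _ ?_ (hg1 x)
    refine le_trans ?_ ((hφ1 x).trans (le_max_left _ _))
    nlinarith
  have hgcont : Continuous (fun x => (max (φ x) 1) ^ (-q)) := by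
    refine (hcont.max continuous_const).rpow_const fun x => Or.inl ?_
    have := hg1 x
    positivity
  have hgle : ∀ x, (max (φ x) 1) ^ (-q) ≤ (c * (1 + ‖x‖)) ^ (-q) := fun x =>
    Real.rpow_le_rpow_of_nonpos (by positivity) (hg2 x) (by linarith [Nat.cast_nonneg (α := ℝ) n])
  have hgint : Integrable (fun x => (max (φ x) 1) ^ (-q)) μ := by
    refine Integrable.mono' ((integrable_one_add_norm (μ := μ) (E := E) hq).const_mul (c ^ (-q)))
      hgcont.aestronglyMeasurable (Filter.Eventually.of_forall fun x => ?_)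
    rw [Real.norm_of_nonneg (by have := hg1 x; positivity), ← Real.mul_rpow hc0.le (by positivity)]
    exact hgle x
  have hgsum : Summable (fun x : L => (max (φ x) 1) ^ (-q)) :=
    Summable.of_nonneg_of_le (fun x => by have := hg1 x; positivity) (fun x => hgle x) (hsum q hq)
  refine ⟨hgint, hgsum, ?_⟩
  have hmeas : NullMeasurableSet P μ := hFD.nullMeasurableSet
  have hone : ∀ x : L, |μ.real P * (max (φ x) 1) ^ (-q) -
      ∫ z in P, (max (φ (x + z)) 1) ^ (-q) ∂μ| ≤
      μ.real P * (2 * n * (A * R)) * (c * (1 + ‖x‖)) ^ (-((n : ℝ) + 1)) := by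
    intro x
    have h1 : μ.real P * (max (φ x) 1) ^ (-q) = ∫ z in P, (max (φ x) 1) ^ (-q) ∂μ := by
      rw [setIntegral_const, smul_eq_mul]
    have hi : IntegrableOn (fun z => (max (φ (x + z)) 1) ^ (-q)) P μ :=
      (hgint.comp_add_left (x : E)).integrableOn
    have hi0 : IntegrableOn (fun _ => (max (φ x) 1) ^ (-q)) P μ := integrableOn_const hPfin.ne
    rw [h1, ← integral_sub hi0 hi]
    have := norm_setIntegral_le_of_norm_le_const (μ := μ) (s := P)
      (f := fun z => (max (φ x) 1) ^ (-q) - (max (φ (x + z)) 1) ^ (-q))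
      (C := 2 * n * (A * R) * (c * (1 + ‖x‖)) ^ (-((n : ℝ) + 1))) hPfin ?_
    · rw [Real.norm_eq_abs] at this
      linarith
    · intro z hz
      rw [Real.norm_eq_abs]
      refine (rpow_neg_sub_le (m := c * (1 + ‖x‖)) (by positivity) (hg2 x) ?_ (hg1 _) (hg1 _)
        hq hq2).trans ?_
      · refine hmin _ _ ?_ (hg1 _)
        refine le_trans ?_ ((hφ1 _).trans (le_max_left _ _))
        have : ‖(x : E)‖ ≤ ‖(x : E) + z‖ + ‖z‖ := by
          simpa using norm_sub_le ((x : E) + z) z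
        have := hR z hz
        refine mul_le_mul_of_nonneg_left ?_ ha.le
        rw [Submodule.coe_norm]
        linarith
      · have : |max (φ x) 1 - max (φ (x + z)) 1| ≤ A * R := by
          refine (abs_max_sub_max_le_abs _ _ _).trans ((hφ2 _ _).trans ?_)
          refine mul_le_mul_of_nonneg_left ?_ hA
          simpa using hR z hz
        gcongr
  have hint : ∫ x, (max (φ x) 1) ^ (-q) ∂μ = ∑' x : L, ∫ z in P, (max (φ (x + z)) 1) ^ (-q) ∂μ := by
    have : MeasurableVAdd L E := (inferInstance : MeasurableVAdd L.toAddSubgroup E)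
    have : VAddInvariantMeasure L E μ := (inferInstance : VAddInvariantMeasure L.toAddSubgroup E μ)
    rw [hFD.integral_eq_tsum'' _ hgint]
    rfl
  have hsumint : Summable (fun x : L => μ.real P * (max (φ x) 1) ^ (-q) -
      ∫ z in P, (max (φ (x + z)) 1) ^ (-q) ∂μ) :=
    Summable.of_norm_bounded ((hsum (n + 1) (by linarith)).mul_left _) hone
  have hs2 : Summable (fun x : L => ∫ z in P, (max (φ (x + z)) 1) ^ (-q) ∂μ) := by
    have := (hgsum.mul_left (μ.real P)).sub hsumint
    simpa using this
  rw [hint, hcov, ← tsum_mul_left, ← (hgsum.mul_left _).tsum_sub hs2, ← tsum_mul_left,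
    ← Real.norm_eq_abs]
  exact tsum_of_norm_bounded ((hsum (n + 1) (by linarith)).mul_left _).hasSum hone

open MeasureTheory Module in
/-- The same comparison for the untruncated sum over the dilated gauge `t * φ`, with the integral
taken for `φ` itself. The term at `0` vanishes, because `0 ^ (-q) = 0` for `q ≠ 0` by convention. -/
lemma lattice_sum_bound_homogeneous {E : Type*} [NormedAddCommGroup E] [NormedSpace ℝ E]
    [FiniteDimensional ℝ E] [MeasurableSpace E] [BorelSpace E] (μ : Measure E)
    [μ.IsAddHaarMeasure] (L : Submodule ℤ E) [DiscreteTopology L] [IsZLattice ℝ L]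
    {a A t : ℝ} (ha : 0 < a) (hA : 0 ≤ A) (ht : 0 < t) :
    ∃ B : ℝ, 0 ≤ B ∧ ∀ φ : E → ℝ, (∀ x, a * ‖x‖ ≤ φ x) → (∀ x y, |φ x - φ y| ≤ A * ‖x - y‖) →
      (∀ r : ℝ, 0 ≤ r → ∀ x, φ (r • x) = r * φ x) →
      ∀ q : ℝ, (finrank ℝ E : ℝ) < q → q ≤ 2 * finrank ℝ E →
        ENNReal.ofReal (t ^ finrank ℝ E * ZLattice.covolume L μ) *
            ∑' x : L, ENNReal.ofReal ((t * φ x) ^ (-q)) ≤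
          ∫⁻ x, ENNReal.ofReal ((max (φ x) 1) ^ (-q)) ∂μ + ENNReal.ofReal B ∧
        ∫⁻ x, ENNReal.ofReal ((max (φ x) 1) ^ (-q)) ∂μ ≤
          ENNReal.ofReal (t ^ finrank ℝ E * ZLattice.covolume L μ) *
            ∑' x : L, ENNReal.ofReal ((t * φ x) ^ (-q)) + ENNReal.ofReal B := by
  set n := finrank ℝ E with hn
  obtain ⟨B, hB⟩ := lattice_sum_bound μ L (a := t * a) (A := t * A) (by positivity) (by positivity)
  have hfin : {x : L | t * a * ‖(x : E)‖ ≤ 1}.Finite := by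
    have h1 : ((Metric.closedBall (0 : E) (t * a)⁻¹) ∩ (L : Set E)).Finite := by
      have : DiscreteTopology L.toAddSubgroup := ‹DiscreteTopology L›
      have hcl : IsClosed (L : Set E) := AddSubgroup.isClosed_of_discrete (H := L.toAddSubgroup)
      exact Metric.finite_isBounded_inter_isClosed (isDiscrete_iff_discreteTopology.2 ‹DiscreteTopology L›)
        Metric.isBounded_closedBall hcl
    refine (h1.preimage (f := ((↑) : L → E)) Subtype.coe_injective.injOn).subset ?_
    intro x hx
    refine ⟨?_, x.2⟩
    rw [mem_closedBall_zero_iff, inv_eq_one_div, le_div_iff₀ (by positivity), mul_comm]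
    exact hx
  set T := hfin.toFinset with hT
  set D : ℝ := ∑ x ∈ T, (1 + (t * a * ‖(x : E)‖) ^ (-(2 * n : ℝ))) with hD
  have hcov : 0 < ZLattice.covolume L μ := ZLattice.covolume_pos L μ
  have hD0 : 0 ≤ D := Finset.sum_nonneg fun x _ => by positivity
  refine ⟨t ^ n * (|B| + ZLattice.covolume L μ * D), by positivity, ?_⟩
  intro φ h1 h2 h3 q hq hq2
  have hn0 : (0 : ℝ) ≤ n := Nat.cast_nonneg n
  have hφ0 : ∀ x, 0 ≤ φ x := fun x => le_trans (by positivity) (h1 x)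
  obtain ⟨hi, hs, hb⟩ := hB (fun x => t * φ x) (fun x => by
    rw [mul_assoc]; exact mul_le_mul_of_nonneg_left (h1 x) ht.le) (fun x y => by
    rw [← mul_sub, abs_mul, abs_of_pos ht, mul_assoc]
    exact mul_le_mul_of_nonneg_left (h2 x y) ht.le) q hq hq2
  -- the sums with and without the truncation at `1` differ by finitely many terms
  have hdiff0 : ∀ x : L, x ∉ T → (t * φ x) ^ (-q) = (max (t * φ x) 1) ^ (-q) := by
    intro x hx
    rw [hT, Set.Finite.mem_toFinset, Set.mem_ofPred_eq, not_le] at hx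
    rw [max_eq_left]
    refine hx.le.trans ?_
    rw [mul_assoc]; exact mul_le_mul_of_nonneg_left (h1 x) ht.le
  have hdiff1 : ∀ x : L, |(t * φ x) ^ (-q) - (max (t * φ x) 1) ^ (-q)| ≤
      (1 + (t * a * ‖(x : E)‖) ^ (-(2 * n : ℝ))) := by
    intro x
    have hmax : |(max (t * φ x) 1) ^ (-q)| ≤ 1 := by
      rw [abs_of_nonneg (by positivity)]
      exact Real.rpow_le_one_of_one_le_of_nonpos (le_max_right _ _) (by linarith)
    by_cases hx0 : x = 0
    · have : φ (x : E) = 0 := by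
        have := h3 0 le_rfl (x : E)
        simpa [hx0] using this
      rw [this, mul_zero, Real.zero_rpow (by linarith), zero_sub, abs_neg]
      rw [this, mul_zero] at hmax
      refine hmax.trans (le_add_of_nonneg_right (by positivity))
    · by_cases hxT : x ∈ T
      · rw [hT, Set.Finite.mem_toFinset, Set.mem_ofPred_eq] at hxT
        have hpos : 0 < t * a * ‖(x : E)‖ := by
          have : 0 < ‖(x : E)‖ := norm_pos_iff.2 (by simpa using hx0)
          positivity
        have hle : t * a * ‖(x : E)‖ ≤ t * φ x := by
          rw [mul_assoc]; exact mul_le_mul_of_nonneg_left (h1 x) ht.le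
        have : |(t * φ x) ^ (-q)| ≤ (t * a * ‖(x : E)‖) ^ (-(2 * n : ℝ)) := by
          rw [abs_of_nonneg (by have := hφ0 x; positivity)]
          refine (Real.rpow_le_rpow_of_nonpos hpos hle (by linarith)).trans ?_
          exact Real.rpow_le_rpow_of_exponent_ge hpos hxT (by linarith)
        refine (abs_sub _ _).trans ?_
        linarith
      · rw [hdiff0 x hxT, sub_self, abs_zero]; positivity
  have hsd : Summable (fun x : L => (t * φ x) ^ (-q) - (max (t * φ x) 1) ^ (-q)) :=
    summable_of_ne_finset_zero (s := T) fun x hx => by rw [hdiff0 x hx, sub_self]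
  have hs' : Summable (fun x : L => (t * φ x) ^ (-q)) := by
    simpa using hsd.add hs
  have hdiff : |∑' x : L, (t * φ x) ^ (-q) - ∑' x : L, (max (t * φ x) 1) ^ (-q)| ≤ D := by
    rw [← hs'.tsum_sub hs, tsum_eq_sum (s := T) fun x hx => by rw [hdiff0 x hx, sub_self]]
    exact (Finset.abs_sum_le_sum_abs _ _).trans (Finset.sum_le_sum fun x _ => hdiff1 x)
  set I := ∫ x, (max (φ x) 1) ^ (-q) ∂μ with hI
  have hint : ∫ x, (max (t * φ x) 1) ^ (-q) ∂μ = (t ^ n)⁻¹ * I := by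
    have := Measure.integral_comp_smul_of_nonneg μ (fun x => (max (φ x) 1) ^ (-q)) t (hR := ht.le)
    simp only [h3 t ht.le, smul_eq_mul] at this
    exact this
  have hi' : Integrable (fun x => (max (φ x) 1) ^ (-q)) μ := by
    have := (integrable_comp_smul_iff μ (fun x => (max (φ x) 1) ^ (-q)) ht.ne').1
    simp only [h3 t ht.le] at this
    exact this hi
  have hmain : |t ^ n * ZLattice.covolume L μ * ∑' x : L, (t * φ x) ^ (-q) - I| ≤
      t ^ n * (|B| + ZLattice.covolume L μ * D) := by
    rw [hint] at hb
    have e : t ^ n * ZLattice.covolume L μ * ∑' x : L, (t * φ x) ^ (-q) - I =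
      t ^ n * ((ZLattice.covolume L μ * ∑' x : L, (max (t * φ x) 1) ^ (-q) - (t ^ n)⁻¹ * I) +
        ZLattice.covolume L μ * (∑' x : L, (t * φ x) ^ (-q) -
          ∑' x : L, (max (t * φ x) 1) ^ (-q))) := by
      field_simp
      ring
    rw [e, abs_mul, abs_of_pos (by positivity : 0 < t ^ n)]
    refine mul_le_mul_of_nonneg_left ((abs_add_le _ _).trans (add_le_add (hb.trans (le_abs_self B)) ?_))
      (by positivity)
    rw [abs_mul, abs_of_pos hcov]
    exact mul_le_mul_of_nonneg_left hdiff hcov.le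
  have hI0 : 0 ≤ I := integral_nonneg fun x => by positivity
  have hS0 : 0 ≤ ∑' x : L, (t * φ x) ^ (-q) :=
    tsum_nonneg fun x => by have := hφ0 x; positivity
  rw [← ofReal_integral_eq_lintegral_ofReal hi' (Filter.Eventually.of_forall fun x => by positivity),
    ← ENNReal.ofReal_tsum_of_nonneg (fun x => by have := hφ0 x; positivity) hs',
    ← ENNReal.ofReal_mul (by positivity), ← ENNReal.ofReal_add hI0 (by positivity),
    ← ENNReal.ofReal_add (by positivity) (by positivity)]
  rw [abs_le] at hmain
  constructor <;> apply ENNReal.ofReal_le_ofReal <;> linarith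

/-! ### Hecke's family of gauges on the mixed space -/

section HeckeGauge

open NumberField NumberField.mixedEmbedding NumberField.Units
  NumberField.Units.dirichletUnitTheorem NumberField.mixedEmbedding.fundamentalCone
open scoped Classical

variable {L : Type*} [Field L] [NumberField L]

/-- The weight at the infinite place `w` attached to `l` in the logarithmic space: the positive
numbers `y_w` with `mult w * log y_w = l_w` for `w ≠ w₀` and `∏ w, y_w ^ mult w = 1`. -/
noncomputable def logWeight (l : logSpace L)
    (w : InfinitePlace L) : ℝ :=
  if h : w = w₀ then Real.exp (-(∑ v, l v) / w.mult) else Real.exp (l ⟨w, h⟩ / w.mult)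

/-- The gauge `x ↦ max_w y_w |x|_w` on the mixed space, where `y = logWeight l`. -/
noncomputable def logGauge (l : logSpace L)
    (x : mixedSpace L) : ℝ :=
  Finset.univ.sup' Finset.univ_nonempty fun w => logWeight l w * normAtPlace w x

lemma logWeight_pos (l : logSpace L) (w : InfinitePlace L) : 0 < logWeight l w := by
  unfold logWeight; split_ifs <;> exact Real.exp_pos _

lemma logGauge_nonneg (l : logSpace L) (x : mixedSpace L) : 0 ≤ logGauge l x :=
  Finset.le_sup'_of_le _ (Finset.mem_univ w₀)
    (mul_nonneg (logWeight_pos l _).le (normAtPlace_nonneg _ _))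

lemma logGauge_smul (l : logSpace L) {r : ℝ} (hr : 0 ≤ r) (x : mixedSpace L) :
    logGauge l (r • x) = r * logGauge l x := by
  unfold logGauge
  rw [Finset.mul₀_sup' hr]
  congr 1
  ext w
  rw [normAtPlace_smul, abs_of_nonneg hr]; ring

lemma logGauge_le_add (l : logSpace L) (x y : mixedSpace L) :
    logGauge l x ≤ logGauge l y + logGauge l (x - y) := by
  refine Finset.sup'_le _ _ fun w _ => ?_
  have h1 : logWeight l w * normAtPlace w y ≤ logGauge l y :=
    Finset.le_sup' (fun w => logWeight l w * normAtPlace w y) (Finset.mem_univ w)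
  have h2 : logWeight l w * normAtPlace w (x - y) ≤ logGauge l (x - y) :=
    Finset.le_sup' (fun w => logWeight l w * normAtPlace w (x - y)) (Finset.mem_univ w)
  have h3 := normAtPlace_add_le w y (x - y)
  rw [add_sub_cancel] at h3
  have := mul_le_mul_of_nonneg_left h3 (logWeight_pos l w).le
  linarith

/-- The weights are bounded above and away from zero on bounded sets of parameters. -/
lemma exists_logWeight_bound {D : Set (logSpace L)} (hD : Bornology.IsBounded D) :
    ∃ C : ℝ, ∀ l ∈ D, ∀ w, Real.exp (-C) ≤ logWeight l w ∧ logWeight l w ≤ Real.exp C := by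
  obtain ⟨R, hR⟩ := hD.exists_norm_le
  refine ⟨|R| + ∑ v : {w : InfinitePlace L // w ≠ w₀}, |R|, fun l hl w => ?_⟩
  have hv : ∀ v, |l v| ≤ |R| := fun v => by
    rw [← Real.norm_eq_abs]; exact ((norm_le_pi_norm l v).trans (hR l hl)).trans (le_abs_self R)
  have hs : |∑ v, l v| ≤ ∑ v : {w : InfinitePlace L // w ≠ w₀}, |R| :=
    (Finset.abs_sum_le_sum_abs _ _).trans (Finset.sum_le_sum fun v _ => hv v)
  have hm : (1 : ℝ) ≤ w.mult := by exact_mod_cast w.mult_pos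
  have hdiv : ∀ z : ℝ, |z / w.mult| ≤ |z| := fun z => by
    rw [abs_div, abs_of_pos (by linarith : (0 : ℝ) < w.mult)]
    exact div_le_self (abs_nonneg _) hm
  have h0 : 0 ≤ ∑ v : {w : InfinitePlace L // w ≠ w₀}, |R| :=
    Finset.sum_nonneg fun _ _ => abs_nonneg R
  unfold logWeight
  split_ifs with h
  · have := abs_le.1 ((hdiv (-(∑ v, l v))).trans ((abs_neg _).le.trans hs))
    have := abs_nonneg R
    constructor <;> apply Real.exp_le_exp.2 <;> linarith
  · have := abs_le.1 ((hdiv (l ⟨w, h⟩)).trans (hv _))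
    constructor <;> apply Real.exp_le_exp.2 <;> linarith

/-- For `l` in a bounded set, the gauges are uniformly comparable with the norm and uniformly
Lipschitz. -/
lemma exists_logGauge_bounds {D : Set (logSpace L)} (hD : Bornology.IsBounded D) :
    ∃ a A : ℝ, 0 < a ∧ 0 < A ∧ ∀ l ∈ D, (∀ x : mixedSpace L, a * ‖x‖ ≤ logGauge l x) ∧
      (∀ x : mixedSpace L, logGauge l x ≤ A * ‖x‖) ∧
      ∀ x y : mixedSpace L, |logGauge l x - logGauge l y| ≤ A * ‖x - y‖ := by
  obtain ⟨C, hC⟩ := exists_logWeight_bound hD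
  refine ⟨Real.exp (-C), Real.exp C, Real.exp_pos _, Real.exp_pos _, fun l hl => ?_⟩
  have hA : ∀ x : mixedSpace L, logGauge l x ≤ Real.exp C * ‖x‖ := fun x => by
    refine Finset.sup'_le _ _ fun w _ => ?_
    refine mul_le_mul (hC l hl w).2 ?_ (normAtPlace_nonneg _ _) (Real.exp_pos _).le
    rw [norm_eq_sup'_normAtPlace]
    exact Finset.le_sup' (fun w => normAtPlace w x) (Finset.mem_univ w)
  refine ⟨fun x => ?_, hA, fun x y => ?_⟩
  · rw [norm_eq_sup'_normAtPlace, Finset.mul₀_sup' (Real.exp_pos _).le]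
    exact Finset.sup'_mono_fun fun w _ =>
      mul_le_mul_of_nonneg_right (hC l hl w).1 (normAtPlace_nonneg _ _)
  · rw [abs_le]
    have h1 := (logGauge_le_add l x y).trans (add_le_add_right (hA (x - y)) _)
    have h2 := (logGauge_le_add l y x).trans (add_le_add_right (hA (y - x)) _)
    rw [norm_sub_rev y x] at h2
    constructor <;> linarith

lemma continuous_logGauge (x : mixedSpace L) : Continuous fun l : logSpace L => logGauge l x := by
  unfold logGauge
  refine Continuous.finset_sup'_apply _ fun w _ => ?_
  refine Continuous.mul ?_ continuous_const
  unfold logWeight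
  split_ifs with h <;> fun_prop

/-- The gauge of a vector of nonzero norm only depends on its norm and, up to a translation of the
parameter, on its logarithmic image. -/
lemma logGauge_eq (l : logSpace L) {x : mixedSpace L} (hx : mixedEmbedding.norm x ≠ 0) :
    logGauge l x = mixedEmbedding.norm x ^ ((Module.finrank ℚ L : ℝ)⁻¹) *
      logGauge (l + logMap x) 1 := by
  have hN : 0 < mixedEmbedding.norm x :=
    lt_of_le_of_ne (mixedEmbedding.norm_nonneg x) hx.symm
  have hxw : ∀ w, 0 < normAtPlace w x := fun w =>
    lt_of_le_of_ne (normAtPlace_nonneg w x) (mixedEmbedding.norm_ne_zero_iff.mp hx w).symm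
  set n : ℝ := (Module.finrank ℚ L : ℝ) with hn
  have hn0 : n ≠ 0 := by
    rw [hn]; exact_mod_cast Module.finrank_pos.ne'
  set lN := Real.log (mixedEmbedding.norm x) with hlN
  have e1 : mixedEmbedding.norm x ^ (n⁻¹) = Real.exp (lN / n) := by
    rw [Real.rpow_def_of_pos hN]; rfl
  have hsum1 : ∑ w : InfinitePlace L, (w.mult : ℝ) * Real.log (normAtPlace w x) = lN := by
    rw [hlN, mixedEmbedding.norm_apply, Real.log_prod fun w _ => (pow_pos (hxw w) _).ne']
    simp [Real.log_pow]
  have hsum2 : ∑ w : InfinitePlace L, (w.mult : ℝ) = n := by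
    rw [hn, ← InfinitePlace.sum_mult_eq]; push_cast; rfl
  have hsplit : ∀ f : InfinitePlace L → ℝ,
      ∑ w, f w = f w₀ + ∑ v : {w : InfinitePlace L // w ≠ w₀}, f v := fun f => by
    rw [← Finset.add_sum_erase _ _ (Finset.mem_univ (w₀ : InfinitePlace L))]
    congr 1
    rw [Finset.sum_subtype]
    simp
  have hmm : ∀ w : InfinitePlace L, (w.mult : ℝ) ≠ 0 := fun w => by
    exact_mod_cast w.mult_pos.ne'
  unfold logGauge
  rw [Finset.mul₀_sup' (by positivity)]
  congr 1
  ext w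
  rw [map_one, mul_one, e1]
  conv_lhs => rw [← Real.exp_log (hxw w)]
  unfold logWeight
  split_ifs with h
  · subst h
    rw [← Real.exp_add, ← Real.exp_add]
    congr 1
    have h1 := hsplit fun w => (w.mult : ℝ) * Real.log (normAtPlace w x)
    have h2 := hsplit fun w => (w.mult : ℝ)
    rw [hsum1] at h1
    rw [hsum2] at h2
    have h3 : ∑ v, (l + logMap x) v = ∑ v, l v +
        (∑ v : {w : InfinitePlace L // w ≠ w₀}, ((v : InfinitePlace L).mult : ℝ) *
          Real.log (normAtPlace (v : InfinitePlace L) x) -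
        (∑ v : {w : InfinitePlace L // w ≠ w₀}, ((v : InfinitePlace L).mult : ℝ)) * (lN / n)) := by
      simp only [Pi.add_apply, Finset.sum_add_distrib, logMap_apply, mul_sub,
        Finset.sum_sub_distrib, Finset.sum_mul]
      rfl
    rw [h3]
    have h1' : ∑ v : {w : InfinitePlace L // w ≠ w₀}, ((v : InfinitePlace L).mult : ℝ) *
          Real.log (normAtPlace (v : InfinitePlace L) x) =
        lN - ((w₀ : InfinitePlace L).mult : ℝ) * Real.log (normAtPlace w₀ x) := by linarith
    have h2' : ∑ v : {w : InfinitePlace L // w ≠ w₀}, ((v : InfinitePlace L).mult : ℝ) =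
        n - ((w₀ : InfinitePlace L).mult : ℝ) := by linarith
    rw [h1', h2']
    have := hmm w₀
    field_simp
    ring
  · rw [← Real.exp_add, ← Real.exp_add]
    congr 1
    simp only [Pi.add_apply, logMap_apply]
    rw [← hlN, ← hn]
    have := hmm w
    field_simp
    ring

end HeckeGauge

/-! ### Unfolding sums over units and ideals -/

section HeckeUnfolding

open NumberField NumberField.mixedEmbedding NumberField.Units
  NumberField.Units.dirichletUnitTheorem NumberField.mixedEmbedding.fundamentalCone
open scoped Classical nonZeroDivisors
open MeasureTheory Module

variable {L : Type*} [Field L] [NumberField L]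

/-- The unit group modulo torsion is the unit lattice, so a sum over units of a function of the
logarithmic embedding is a multiple of a sum over the lattice. -/
lemma tsum_units (f : logSpace L → ENNReal) :
    ∑' u : (𝓞 L)ˣ, f (logEmbedding L (Additive.ofMul u)) =
      torsionOrder L * ∑' v : unitLattice L, f v := by
  have hσ : ∀ v : unitLattice L, ∃ u : (𝓞 L)ˣ, logEmbedding L (Additive.ofMul u) = v := by
    rintro ⟨v, hv⟩
    simp only [unitLattice, Submodule.mem_map, Submodule.mem_top, true_and] at hv
    obtain ⟨u, hu⟩ := hv
    exact ⟨u.toMul, hu⟩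
  choose σ hσ using hσ
  have hlog : ∀ (v : unitLattice L) (z : torsion L),
      logEmbedding L (Additive.ofMul (σ v * z)) = v := fun v z => by
    rw [ofMul_mul, map_add, hσ, logEmbedding_eq_zero_iff.2 z.2, add_zero]
  have hbij : Function.Bijective fun p : unitLattice L × torsion L => σ p.1 * (p.2 : (𝓞 L)ˣ) := by
    constructor
    · rintro ⟨v, z⟩ ⟨v', z'⟩ h
      have hv : v = v' := Subtype.ext (by
        rw [← hlog v z, ← hlog v' z']; exact congrArg (fun u => logEmbedding L (Additive.ofMul u)) h)
      subst hv
      simp only [mul_right_inj] at h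
      rw [Subtype.ext h]
    · intro u
      set v : unitLattice L := ⟨logEmbedding L (Additive.ofMul u), by
        simp only [unitLattice, Submodule.mem_map, Submodule.mem_top, true_and]
        exact ⟨Additive.ofMul u, rfl⟩⟩ with hv
      refine ⟨⟨v, ⟨(σ v)⁻¹ * u, ?_⟩⟩, ?_⟩
      · rw [← logEmbedding_eq_zero_iff, ofMul_mul, map_add, ofMul_inv, map_neg, hσ, hv,
          neg_add_cancel]
      · simp
  rw [← (Equiv.ofBijective _ hbij).tsum_eq]
  simp only [Equiv.ofBijective_apply, hlog]
  rw [ENNReal.tsum_prod (f := fun (v : unitLattice L) (_ : torsion L) => f v),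
    ← ENNReal.tsum_mul_left]
  congr 1
  ext v
  rw [ENNReal.tsum_const, torsionOrder, ENat.card_eq_coe_natCard]
  simp

/-- Unfolding: the translates of a fundamental domain by the unit lattice tile the logarithmic space. -/
lemma tsum_units_setLIntegral {D : Set (logSpace L)}
    (hD : IsAddFundamentalDomain (unitLattice L) D (volume : Measure (logSpace L)))
    (f : logSpace L → ENNReal) (v₀ : logSpace L) :
    ∑' u : (𝓞 L)ˣ, ∫⁻ l in D, f (l + (logEmbedding L (Additive.ofMul u) + v₀)) =
      torsionOrder L * ∫⁻ l, f l := by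
  rw [tsum_units (fun v => ∫⁻ l in D, f (l + (v + v₀)))]
  have : MeasurableVAdd (unitLattice L) (logSpace L) :=
    (inferInstance : MeasurableVAdd (unitLattice L).toAddSubgroup (logSpace L))
  have : VAddInvariantMeasure (unitLattice L) (logSpace L) (volume : Measure (logSpace L)) :=
    (inferInstance : VAddInvariantMeasure (unitLattice L).toAddSubgroup (logSpace L) volume)
  have h := hD.lintegral_eq_tsum'' (fun l => f (l + v₀))
  rw [lintegral_add_right_eq_self] at h
  rw [h]
  congr 2
  ext v
  congr 1
  ext l
  rw [Submodule.vadd_def, vadd_eq_add]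
  congr 1
  abel

/-- The sum over the associates of `x` of the integrals of the gauges over a fundamental domain for
the unit lattice unfolds to a constant multiple of `|N x| ^ (-s)`. -/
lemma tsum_units_logGauge {D : Set (logSpace L)}
    (hD : IsAddFundamentalDomain (unitLattice L) D (volume : Measure (logSpace L)))
    {x : 𝓞 L} (hx : x ≠ 0) (s : ℝ) :
    ∑' u : (𝓞 L)ˣ, ∫⁻ l in D,
        ENNReal.ofReal (logGauge l (mixedEmbedding L ((u * x : 𝓞 L) : L)) ^ (-(finrank ℚ L * s))) =
      (torsionOrder L * ∫⁻ l : logSpace L,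
        ENNReal.ofReal (logGauge l 1 ^ (-(finrank ℚ L * s)))) *
        ENNReal.ofReal ((Ideal.absNorm (Ideal.span {x}) : ℝ) ^ (-s)) := by
  have hnorm : ∀ y : 𝓞 L, mixedEmbedding.norm (mixedEmbedding L (y : L)) =
      Ideal.absNorm (Ideal.span {y}) := fun y => by
    rw [norm_eq_norm, Ideal.absNorm_span_singleton, ← Algebra.coe_norm_int]
    simp [Nat.cast_natAbs]
  have hxn : (0 : ℝ) < Ideal.absNorm (Ideal.span {x}) := by
    rw [Nat.cast_pos, Nat.pos_iff_ne_zero, ne_eq, Ideal.absNorm_eq_zero_iff,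
      Ideal.span_singleton_eq_bot]
    exact hx
  have hx0 : mixedEmbedding.norm (mixedEmbedding L (x : L)) ≠ 0 := by
    rw [hnorm]; exact hxn.ne'
  have hn0 : (finrank ℚ L : ℝ) ≠ 0 := by exact_mod_cast finrank_pos.ne'
  have key : ∀ (u : (𝓞 L)ˣ) (l : logSpace L),
      ENNReal.ofReal (logGauge l (mixedEmbedding L ((u * x : 𝓞 L) : L)) ^ (-(finrank ℚ L * s))) =
      ENNReal.ofReal ((Ideal.absNorm (Ideal.span {x}) : ℝ) ^ (-s)) *
      ENNReal.ofReal (logGauge (l + (logEmbedding L (Additive.ofMul u) +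
        logMap (mixedEmbedding L (x : L)))) 1 ^ (-(finrank ℚ L * s))) := by
    intro u l
    have hu : mixedEmbedding.norm (mixedEmbedding L ((u : 𝓞 L) : L)) = 1 := norm_unit u
    have e : mixedEmbedding L ((u * x : 𝓞 L) : L) =
        mixedEmbedding L ((u : 𝓞 L) : L) * mixedEmbedding L (x : L) :=
      map_mul (mixedEmbedding L) ((u : 𝓞 L) : L) (x : L)
    rw [logGauge_eq l (x := mixedEmbedding L ((u * x : 𝓞 L) : L))
      (by rw [e, map_mul, hu, one_mul]; exact hx0), e, map_mul, hu, one_mul, hnorm,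
      logMap_mul (by rw [hu]; exact one_ne_zero) hx0, logMap_eq_logEmbedding,
      Real.mul_rpow (by positivity) (logGauge_nonneg _ _), ENNReal.ofReal_mul (by positivity),
      ← Real.rpow_mul hxn.le]
    congr 3
    field_simp
  simp_rw [key]
  have hmeas : ∀ u : (𝓞 L)ˣ, Measurable fun l : logSpace L =>
      ENNReal.ofReal (logGauge (l + (logEmbedding L (Additive.ofMul u) +
        logMap (mixedEmbedding L (x : L)))) 1 ^ (-(finrank ℚ L * s))) := fun u => by
    refine ENNReal.measurable_ofReal.comp (Measurable.pow_const ?_ _)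
    exact ((continuous_logGauge 1).comp (continuous_id.add continuous_const)).measurable
  simp_rw [lintegral_const_mul _ (hmeas _)]
  rw [ENNReal.tsum_mul_left, tsum_units_setLIntegral hD
    (fun l => ENNReal.ofReal (logGauge l 1 ^ (-(finrank ℚ L * s)))), mul_comm]

/-- Summation over the nonzero elements of `J` is summation over the integral ideals `I` in the
inverse class of `J`, followed by summation over the generators of `I * J`. -/
lemma tsum_ideal_elements {R : Type*} [CommRing R] [IsDedekindDomain R] (J : (Ideal R)⁰) (f : R → ENNReal)
    (T : Ideal R → ENNReal)
    (hT : ∀ x : R, x ≠ 0 → ∑' u : Rˣ, f (u * x) = T (Ideal.span {x})) :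
    ∑' x : {x : R // x ∈ (J : Ideal R) ∧ x ≠ 0}, f x =
      ∑' I : {I : (Ideal R)⁰ // ClassGroup.mk0 I = (ClassGroup.mk0 J)⁻¹},
        T ((I : (Ideal R)⁰) * J) := by
  have hg : ∀ I : {I : (Ideal R)⁰ // ClassGroup.mk0 I = (ClassGroup.mk0 J)⁻¹},
      ∃ g : R, Ideal.span {g} = (((I : (Ideal R)⁰) * J : (Ideal R)⁰) : Ideal R) := by
    rintro ⟨I, hI⟩
    have : ClassGroup.mk0 (I * J) = 1 := by rw [map_mul, hI, inv_mul_cancel]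
    obtain ⟨g, hg⟩ := (ClassGroup.mk0_eq_one_iff (I * J).2).1 this
    exact ⟨g, hg.symm⟩
  choose g hg using hg
  have hg0 : ∀ I, g I ≠ 0 := fun I h => by
    have := hg I
    rw [h, Ideal.span_singleton_eq_bot.2 rfl] at this
    exact nonZeroDivisors.ne_zero (I.1 * J).2 this.symm
  have hspan : ∀ (I) (u : Rˣ), Ideal.span {(u * g I : R)} = (I : (Ideal R)⁰) * J := by
    intro I u
    rw [mul_comm, Ideal.span_singleton_mul_right_unit u.isUnit, hg]; rfl
  have hmem : ∀ (I) (u : Rˣ), (u * g I : R) ∈ (J : Ideal R) ∧ (u * g I : R) ≠ 0 := by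
    intro I u
    refine ⟨?_, mul_ne_zero u.ne_zero (hg0 I)⟩
    have : (u * g I : R) ∈ Ideal.span {(u * g I : R)} := Ideal.mem_span_singleton_self _
    rw [hspan] at this
    exact (Ideal.mul_le_right : (I.1 : Ideal R) * (J : Ideal R) ≤ J) this
  have hbij : Function.Bijective
      fun p : {I : (Ideal R)⁰ // ClassGroup.mk0 I = (ClassGroup.mk0 J)⁻¹} × Rˣ =>
        (⟨p.2 * g p.1, hmem p.1 p.2⟩ : {x : R // x ∈ (J : Ideal R) ∧ x ≠ 0}) := by
    constructor
    · rintro ⟨I, u⟩ ⟨I', u'⟩ h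
      simp only [Subtype.mk.injEq] at h
      have h1 : I = I' := by
        have := hspan I u
        rw [h, hspan I' u'] at this
        exact Subtype.ext (Subtype.ext (mul_right_cancel₀ (nonZeroDivisors.ne_zero J.2) this).symm)
      subst h1
      rw [Units.ext (mul_right_cancel₀ (hg0 I) h)]
    · rintro ⟨x, hxJ, hx0⟩
      obtain ⟨I, hI⟩ := Ideal.dvd_span_singleton.2 hxJ
      have hI0 : I ∈ (Ideal R)⁰ := by
        rw [mem_nonZeroDivisors_iff_ne_zero]
        rintro rfl
        rw [mul_zero] at hI
        exact hx0 (Ideal.span_singleton_eq_bot.1 hI)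
      have hcl : ClassGroup.mk0 ⟨I, hI0⟩ = (ClassGroup.mk0 J)⁻¹ := by
        rw [eq_inv_iff_mul_eq_one, ← map_mul]
        refine (ClassGroup.mk0_eq_one_iff (Submonoid.mul_mem _ hI0 J.2)).2 ⟨x, ?_⟩
        change I * J = _
        rw [mul_comm, ← hI]
      have : Ideal.span {g ⟨⟨I, hI0⟩, hcl⟩} = Ideal.span {x} := by
        rw [hg, hI, mul_comm (J : Ideal R)]; rfl
      obtain ⟨u, hu⟩ := Ideal.span_singleton_eq_span_singleton.1 this
      exact ⟨⟨⟨⟨I, hI0⟩, hcl⟩, u⟩, Subtype.ext ((mul_comm _ _).trans hu)⟩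
  rw [← (Equiv.ofBijective _ hbij).tsum_eq]
  simp only [Equiv.ofBijective_apply]
  rw [ENNReal.tsum_prod (f := fun I (u : Rˣ) => f (u * g I))]
  congr 1
  ext I
  rw [hT _ (hg0 I), hg]; rfl

lemma tsum_idealLattice (J : (Ideal (𝓞 L))⁰) (f : mixedSpace L → ENNReal) (hf : f 0 = 0) :
    ∑' x : idealLattice L (FractionalIdeal.mk0 L J), f x =
      ∑' x : {x : 𝓞 L // x ∈ (J : Ideal (𝓞 L)) ∧ x ≠ 0}, f (mixedEmbedding L ((x : 𝓞 L) : L)) := by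
  have hmem : ∀ x : {x : 𝓞 L // x ∈ (J : Ideal (𝓞 L)) ∧ x ≠ 0},
      mixedEmbedding L ((x : 𝓞 L) : L) ∈ idealLattice L (FractionalIdeal.mk0 L J) := by
    intro x
    rw [mem_idealLattice]
    refine ⟨((x : 𝓞 L) : L), ?_, rfl⟩
    simpa using x.2.1
  refine tsum_eq_tsum_of_ne_zero_bij
    (f := fun x : idealLattice L (FractionalIdeal.mk0 L J) => f x)
    (fun x => ⟨mixedEmbedding L ((x.1 : 𝓞 L) : L), hmem x.1⟩) ?_ ?_ ?_
  · intro x y h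
    simp only [Subtype.mk.injEq] at h
    have := mixedEmbedding_injective L h
    exact Subtype.ext (Subtype.ext (RingOfIntegers.coe_injective this))
  · rintro ⟨x, hx⟩ h
    rw [mem_idealLattice] at hx
    obtain ⟨y, hy, rfl⟩ := hx
    simp only [FractionalIdeal.coe_mk0, SetLike.mem_coe, FractionalIdeal.mem_coeIdeal] at hy
    obtain ⟨z, hz, rfl⟩ := hy
    have hz0 : z ≠ 0 := by
      rintro rfl
      simp [hf] at h
    refine ⟨⟨⟨z, hz, hz0⟩, ?_⟩, rfl⟩
    exact h
  · intro x; rfl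

end HeckeUnfolding

/-! ### Partial zeta functions -/

section PartialZeta

open NumberField NumberField.mixedEmbedding NumberField.Units
  NumberField.Units.dirichletUnitTheorem NumberField.mixedEmbedding.fundamentalCone
open scoped Classical nonZeroDivisors
open MeasureTheory Module

variable {L : Type*} [Field L] [NumberField L]

/-- The partial zeta function of an ideal class `C`: the sum of `N I ^ (-s)` over the nonzero
integral ideals `I` of class `C`, with values in `[0, ∞]`. -/
noncomputable def partialZeta (C : ClassGroup (𝓞 L)) (s : ℝ) : ENNReal :=
  ∑' I : {I : (Ideal (𝓞 L))⁰ // ClassGroup.mk0 I = C},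
    ENNReal.ofReal ((Ideal.absNorm ((I : (Ideal (𝓞 L))⁰) : Ideal (𝓞 L)) : ℝ) ^ (-s))

/-- Hecke's formula: averaging the lattice sums of the gauges over a fundamental domain for the units
produces the partial zeta function of the inverse class, up to a factor independent of the class.
The normalization `t` removes the dependence on the norm of `J`. -/
lemma setLIntegral_tsum_logGauge {D : Set (logSpace L)}
    (hD : IsAddFundamentalDomain (unitLattice L) D (volume : Measure (logSpace L)))
    (J : (Ideal (𝓞 L))⁰) {s t : ℝ} (hs : 0 < s)
    (ht : t = (Ideal.absNorm (J : Ideal (𝓞 L)) : ℝ) ^ (-(finrank ℚ L : ℝ)⁻¹)) :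
    ∫⁻ l in D, ∑' x : idealLattice L (FractionalIdeal.mk0 L J),
        ENNReal.ofReal ((t * logGauge l x) ^ (-(finrank ℚ L * s))) =
      (torsionOrder L * ∫⁻ l : logSpace L,
        ENNReal.ofReal (logGauge l 1 ^ (-(finrank ℚ L * s)))) *
        partialZeta (ClassGroup.mk0 J)⁻¹ s := by
  have hn0 : (0 : ℝ) < finrank ℚ L := by exact_mod_cast finrank_pos
  have hJ : (0 : ℝ) < Ideal.absNorm (J : Ideal (𝓞 L)) := by
    exact_mod_cast Ideal.absNorm_pos_of_nonZeroDivisors J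
  have ht0 : 0 < t := by rw [ht]; positivity
  have htq : t ^ (-(finrank ℚ L * s)) = (Ideal.absNorm (J : Ideal (𝓞 L)) : ℝ) ^ s := by
    rw [ht, ← Real.rpow_mul hJ.le]
    congr 1
    field_simp
  have hmeas : ∀ x : mixedSpace L, Measurable fun l : logSpace L =>
      ENNReal.ofReal (logGauge l x ^ (-(finrank ℚ L * s))) := fun x =>
    ENNReal.measurable_ofReal.comp ((continuous_logGauge x).measurable.pow_const _)
  have h1 : ∀ l : logSpace L, ∑' x : idealLattice L (FractionalIdeal.mk0 L J),
        ENNReal.ofReal ((t * logGauge l x) ^ (-(finrank ℚ L * s))) =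
      ENNReal.ofReal ((Ideal.absNorm (J : Ideal (𝓞 L)) : ℝ) ^ s) *
      ∑' x : {x : 𝓞 L // x ∈ (J : Ideal (𝓞 L)) ∧ x ≠ 0},
        ENNReal.ofReal (logGauge l (mixedEmbedding L ((x : 𝓞 L) : L)) ^
          (-(finrank ℚ L * s))) := by
    intro l
    rw [← tsum_idealLattice J (fun x => ENNReal.ofReal (logGauge l x ^ (-(finrank ℚ L * s)))),
      ← ENNReal.tsum_mul_left]
    · congr 1
      ext x
      rw [Real.mul_rpow ht0.le (logGauge_nonneg _ _), htq, ENNReal.ofReal_mul (by positivity)]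
    · have : logGauge l (0 : mixedSpace L) = 0 := by
        have := logGauge_smul l le_rfl (0 : mixedSpace L)
        simpa using this
      rw [this, Real.zero_rpow (by nlinarith), ENNReal.ofReal_zero]
  have : Countable (𝓞 L) := (RingOfIntegers.basis L).equivFun.injective.countable
  simp_rw [h1]
  rw [lintegral_const_mul _ (Measurable.tsum fun x => hmeas _),
    lintegral_tsum fun x => (hmeas _).aemeasurable]
  rw [tsum_ideal_elements J
    (fun x => ∫⁻ l in D, ENNReal.ofReal (logGauge l (mixedEmbedding L (x : L)) ^
      (-(finrank ℚ L * s))))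
    (fun I => (torsionOrder L * ∫⁻ l : logSpace L,
      ENNReal.ofReal (logGauge l 1 ^ (-(finrank ℚ L * s)))) *
      ENNReal.ofReal ((Ideal.absNorm I : ℝ) ^ (-s))) (fun x hx => tsum_units_logGauge hD hx s)]
  rw [ENNReal.tsum_mul_left, mul_left_comm, partialZeta, ← ENNReal.tsum_mul_left]
  congr 2
  ext I
  rw [← ENNReal.ofReal_mul (by positivity), map_mul, Nat.cast_mul,
    Real.mul_rpow (by positivity) (by positivity), mul_left_comm, ← Real.rpow_add hJ,
    add_neg_cancel, Real.rpow_zero, mul_one]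

/-- Up to a bounded error, a multiple of `partialZeta C s` by a factor independent of `C` equals an
integral that does not depend on `C`. The class enters only through the bound `B`, since the
normalized covolume is the same for all ideals. -/
lemma exists_partialZeta_bounds {D : Set (logSpace L)}
    (hD : IsAddFundamentalDomain (unitLattice L) D (volume : Measure (logSpace L)))
    (hDb : Bornology.IsBounded D) (hDm : MeasurableSet D) (C : ClassGroup (𝓞 L)) :
    ∃ B : ℝ, ∀ s : ℝ, 1 < s → s ≤ 2 →
      ENNReal.ofReal (2⁻¹ ^ InfinitePlace.nrComplexPlaces L * √|discr L|) *
          ((torsionOrder L * ∫⁻ l : logSpace L,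
            ENNReal.ofReal (logGauge l 1 ^ (-(finrank ℚ L * s)))) * partialZeta C s) ≤
        (∫⁻ l in D, ∫⁻ x : mixedSpace L,
          ENNReal.ofReal ((max (logGauge l x) 1) ^ (-(finrank ℚ L * s)))) + ENNReal.ofReal B ∧
      (∫⁻ l in D, ∫⁻ x : mixedSpace L,
          ENNReal.ofReal ((max (logGauge l x) 1) ^ (-(finrank ℚ L * s)))) ≤
        ENNReal.ofReal (2⁻¹ ^ InfinitePlace.nrComplexPlaces L * √|discr L|) *
          ((torsionOrder L * ∫⁻ l : logSpace L,
            ENNReal.ofReal (logGauge l 1 ^ (-(finrank ℚ L * s)))) * partialZeta C s) +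
          ENNReal.ofReal B := by
  obtain ⟨J, hJC⟩ := ClassGroup.mk0_surjective C⁻¹
  obtain ⟨a, A, ha, hA, hb⟩ := exists_logGauge_bounds hDb
  have hn0 : (0 : ℝ) < finrank ℚ L := by exact_mod_cast finrank_pos
  have hJ : (0 : ℝ) < Ideal.absNorm (J : Ideal (𝓞 L)) := by
    exact_mod_cast Ideal.absNorm_pos_of_nonZeroDivisors J
  set t : ℝ := (Ideal.absNorm (J : Ideal (𝓞 L)) : ℝ) ^ (-(finrank ℚ L : ℝ)⁻¹) with ht
  have ht0 : 0 < t := by rw [ht]; positivity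
  have htn : t ^ finrank ℚ L = (Ideal.absNorm (J : Ideal (𝓞 L)) : ℝ)⁻¹ := by
    rw [ht, ← Real.rpow_natCast, ← Real.rpow_mul hJ.le, neg_mul, inv_mul_cancel₀ hn0.ne',
      Real.rpow_neg_one]
  have hV : t ^ finrank ℝ (mixedSpace L) *
      ZLattice.covolume (idealLattice L (FractionalIdeal.mk0 L J)) =
      2⁻¹ ^ InfinitePlace.nrComplexPlaces L * √|discr L| := by
    rw [mixedEmbedding.finrank, htn, covolume_idealLattice, FractionalIdeal.coe_mk0,
      FractionalIdeal.coeIdeal_absNorm]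
    push_cast
    field_simp
  obtain ⟨B, hB0, hB⟩ := lattice_sum_bound_homogeneous (volume : Measure (mixedSpace L))
    (idealLattice L (FractionalIdeal.mk0 L J)) ha hA.le ht0
  rw [hV] at hB
  have hvol : (volume D : ENNReal) ≠ ⊤ := hDb.measure_lt_top.ne
  refine ⟨B * (volume D).toReal, fun s hs1 hs2 => ?_⟩
  have hBD : ENNReal.ofReal (B * (volume D).toReal) = ∫⁻ l in D, ENNReal.ofReal B := by
    rw [setLIntegral_const, ENNReal.ofReal_mul hB0, ENNReal.ofReal_toReal hvol]
  have hq1 : (finrank ℝ (mixedSpace L) : ℝ) < finrank ℚ L * s := by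
    rw [mixedEmbedding.finrank]; nlinarith
  have hq2 : finrank ℚ L * s ≤ 2 * (finrank ℝ (mixedSpace L) : ℝ) := by
    rw [mixedEmbedding.finrank]; nlinarith
  have hmain := fun l (hl : l ∈ D) => hB (logGauge l) (hb l hl).1 (hb l hl).2.2
    (fun r hr x => logGauge_smul l hr x) _ hq1 hq2
  have hun := setLIntegral_tsum_logGauge hD J (s := s) (by linarith) ht
  rw [hJC, inv_inv] at hun
  rw [← hun, ← lintegral_const_mul' _ _ ENNReal.ofReal_ne_top, hBD,
    ← lintegral_add_right _ measurable_const, ← lintegral_add_right _ measurable_const]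
  exact ⟨setLIntegral_mono' hDm fun l hl => (hmain l hl).1,
    setLIntegral_mono' hDm fun l hl => (hmain l hl).2⟩

/-- The partial zeta functions of two ideal classes have bounded difference on `(1, 2]`. -/
theorem partialZeta_le (C C' : ClassGroup (𝓞 L)) :
    ∃ B : ℝ, ∀ s : ℝ, 1 < s → s ≤ 2 →
      partialZeta C s ≤ partialZeta C' s + ENNReal.ofReal B := by
  set b := Free.chooseBasis ℤ (unitLattice L) with hb
  set D := ZSpan.fundamentalDomain (b.ofZLatticeBasis ℝ) with hDdef
  have hD : IsAddFundamentalDomain (unitLattice L) D (volume : Measure (logSpace L)) :=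
    ZLattice.isAddFundamentalDomain b _
  have hDb : Bornology.IsBounded D := ZSpan.fundamentalDomain_isBounded _
  have hDm : MeasurableSet D := ZSpan.fundamentalDomain_measurableSet _
  have hvol : (volume D : ENNReal) ≠ ⊤ := hDb.measure_lt_top.ne
  have hvol0 : (volume D : ENNReal) ≠ 0 := ZSpan.measure_fundamentalDomain_ne_zero _
  obtain ⟨B, hB⟩ := exists_partialZeta_bounds hD hDb hDm C
  obtain ⟨B', hB'⟩ := exists_partialZeta_bounds hD hDb hDm C'
  obtain ⟨a, A, ha, hA, hbd⟩ := exists_logGauge_bounds hDb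
  have hn0 : (0 : ℝ) < finrank ℚ L := by exact_mod_cast finrank_pos
  set V := ENNReal.ofReal (2⁻¹ ^ InfinitePlace.nrComplexPlaces L * √|discr L|) with hVdef
  have hV0 : V ≠ 0 := by
    rw [hVdef, ne_eq, ENNReal.ofReal_eq_zero, not_le]
    have : (0 : ℝ) < |(discr L : ℝ)| := abs_pos.2 (Int.cast_ne_zero.2 (discr_ne_zero L))
    exact mul_pos (by positivity) (Real.sqrt_pos.2 this)
  -- a lower bound, uniform in `s`, for the constant produced by the unfolding
  set A' : ℝ := max (A * ‖(1 : mixedSpace L)‖) 1 with hA'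
  have hA'1 : 1 ≤ A' := le_max_right _ _
  set k : ENNReal := volume D * ENNReal.ofReal (A' ^ (-(finrank ℚ L * 2 : ℝ))) with hk
  have hk0 : V * (torsionOrder L * k) ≠ 0 := by
    refine mul_ne_zero hV0 (mul_ne_zero ?_ (mul_ne_zero hvol0 ?_))
    · exact_mod_cast (torsionOrder_pos L).ne'
    · rw [ne_eq, ENNReal.ofReal_eq_zero, not_le]; positivity
  have hktop : V * (torsionOrder L * k) ≠ ⊤ :=
    ENNReal.mul_ne_top ENNReal.ofReal_ne_top (ENNReal.mul_ne_top (ENNReal.natCast_ne_top _)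
      (ENNReal.mul_ne_top hvol ENNReal.ofReal_ne_top))
  refine ⟨(ENNReal.ofReal B + ENNReal.ofReal B').toReal / (V * (torsionOrder L * k)).toReal,
    fun s hs1 hs2 => ?_⟩
  obtain ⟨h1, -⟩ := hB s hs1 hs2
  obtain ⟨h2, h3⟩ := hB' s hs1 hs2
  set c := ∫⁻ l : logSpace L, ENNReal.ofReal (logGauge l 1 ^ (-(finrank ℚ L * s))) with hc
  set M := ∫⁻ l in D, ∫⁻ x : mixedSpace L,
          ENNReal.ofReal ((max (logGauge l x) 1) ^ (-(finrank ℚ L * s))) with hM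
  have hkc : k ≤ c := by
    rw [hk, mul_comm, ← setLIntegral_const, hc]
    refine le_trans (setLIntegral_mono' hDm fun l hl => ?_) (setLIntegral_le_lintegral D _)
    apply ENNReal.ofReal_le_ofReal
    have hpos : 0 < logGauge l (1 : mixedSpace L) := by
      have h1 := (hbd l hl).1 1
      have : 0 < ‖(1 : mixedSpace L)‖ := norm_pos_iff.2 one_ne_zero
      exact lt_of_lt_of_le (by positivity) h1
    calc A' ^ (-(finrank ℚ L * 2 : ℝ)) ≤ A' ^ (-(finrank ℚ L * s)) :=
          Real.rpow_le_rpow_of_exponent_le hA'1 (by nlinarith)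
      _ ≤ _ := Real.rpow_le_rpow_of_nonpos hpos (((hbd l hl).2.1 1).trans (le_max_left _ _))
          (by nlinarith)
  have hMtop : M ≠ ⊤ := by
    obtain ⟨_, hint⟩ := lattice_sum_bound (volume : Measure (mixedSpace L))
      (idealLattice L (FractionalIdeal.mk0 L 1)) ha ha.le
    obtain ⟨hint, -, -⟩ := hint (fun x => a * ‖x‖) (fun x => le_rfl) (fun x y => by
      rw [← mul_sub, abs_mul, abs_of_pos ha]
      exact mul_le_mul_of_nonneg_left (abs_norm_sub_norm_le x y) ha.le) (finrank ℚ L * s)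
      (by rw [mixedEmbedding.finrank]; nlinarith) (by rw [mixedEmbedding.finrank]; nlinarith)
    have hle : M ≤ ∫⁻ l in D, ∫⁻ x : mixedSpace L,
          ENNReal.ofReal ((max (a * ‖x‖) 1) ^ (-(finrank ℚ L * s))) := by
      refine setLIntegral_mono' hDm fun l hl => lintegral_mono fun x => ?_
      apply ENNReal.ofReal_le_ofReal
      exact Real.rpow_le_rpow_of_nonpos (by positivity) (max_le_max_right _ ((hbd l hl).1 x))
        (by nlinarith)
    refine ne_top_of_le_ne_top ?_ hle
    rw [setLIntegral_const]
    refine ENNReal.mul_ne_top ?_ hvol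
    rw [← ofReal_integral_eq_lintegral_ofReal hint
      (Filter.Eventually.of_forall fun x => by positivity)]
    exact ENNReal.ofReal_ne_top
  have hζ0 : partialZeta C' s ≠ 0 := by
    obtain ⟨I, hI⟩ := ClassGroup.mk0_surjective C'
    rw [partialZeta, ne_eq, ENNReal.tsum_eq_zero, not_forall]
    refine ⟨⟨I, hI⟩, ?_⟩
    rw [ENNReal.ofReal_eq_zero, not_le]
    have : (0 : ℝ) < Ideal.absNorm (I : Ideal (𝓞 L)) := by
      exact_mod_cast Ideal.absNorm_pos_of_nonZeroDivisors I
    positivity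
  set W := V * (torsionOrder L * c) with hW
  have hkW : V * (torsionOrder L * k) ≤ W := by rw [hW]; gcongr
  have hW0 : W ≠ 0 := fun h => hk0 (le_antisymm (h ▸ hkW) zero_le)
  rw [← mul_assoc, ← hW] at h1 h2 h3
  have hWtop : W ≠ ⊤ := by
    intro h
    rw [h, ENNReal.top_mul hζ0, top_le_iff] at h2
    exact ENNReal.add_ne_top.2 ⟨hMtop, ENNReal.ofReal_ne_top⟩ h2
  have h4 : W * partialZeta C s ≤ W * (partialZeta C' s +
      (ENNReal.ofReal B + ENNReal.ofReal B') / W) := by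
    rw [mul_add, ENNReal.mul_div_cancel hW0 hWtop]
    calc W * partialZeta C s ≤ M + ENNReal.ofReal B := h1
      _ ≤ W * partialZeta C' s + ENNReal.ofReal B' + ENNReal.ofReal B := by gcongr
      _ = _ := by ring
  rw [ENNReal.mul_le_mul_iff_right hW0 hWtop] at h4
  refine h4.trans (add_le_add_right ?_ _)
  rw [ENNReal.ofReal_div_of_pos (ENNReal.toReal_pos hk0 hktop), ENNReal.ofReal_toReal hktop,
    ENNReal.ofReal_toReal (ENNReal.add_ne_top.2 ⟨ENNReal.ofReal_ne_top, ENNReal.ofReal_ne_top⟩)]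
  gcongr

end PartialZeta

/-! ### Euler products over ideals -/

section EulerProduct

open scoped Classical nonZeroDivisors Topology
open IsDedekindDomain Filter

/-- A nonzero prime ideal as an element of the monoid of nonzero ideals. -/
def primeIdeal {R : Type*} [CommRing R] [IsDedekindDomain R] (p : HeightOneSpectrum R) :
    (Ideal R)⁰ :=
  ⟨p.asIdeal, mem_nonZeroDivisors_of_ne_zero p.ne_bot⟩

variable {R : Type*} [CommRing R] [IsDedekindDomain R]

/-- Sieving the sum of a completely multiplicative function by a finite set of primes. -/
lemma prod_one_sub_mul_tsum (f : (Ideal R)⁰ →* ℝ) (hf : Summable f)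
    (S : Finset (HeightOneSpectrum R)) :
    (∏ p ∈ S, (1 - f (primeIdeal p))) * ∑' I, f I =
      ∑' I, if ∀ p ∈ S, ¬ primeIdeal p ∣ I then f I else 0 := by
  induction S using Finset.induction_on with
  | empty => simp
  | insert q S hq ih =>
    set g : (Ideal R)⁰ → ℝ := fun I => if ∀ p ∈ S, ¬ primeIdeal p ∣ I then f I else 0 with hg
    have hgs : Summable g := by
      refine Summable.of_norm_bounded hf.norm fun I => ?_
      simp only [hg]
      split_ifs <;> simp
    have hinj : Function.Injective fun I : (Ideal R)⁰ => primeIdeal q * I := fun I J h =>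
      Subtype.ext (mul_left_cancel₀ q.ne_bot (congrArg Subtype.val h))
    have hprime : ∀ p : HeightOneSpectrum R, ∀ I J : (Ideal R)⁰,
        primeIdeal p ∣ I * J → primeIdeal p ∣ I ∨ primeIdeal p ∣ J := by
      intro p I J h
      simp only [nonZeroDivisors_dvd_iff_dvd_coe] at h ⊢
      exact p.prime.dvd_or_dvd h
    have hqg : ∀ I, f (primeIdeal q) * g I = g (primeIdeal q * I) := by
      intro I
      have : (∀ p ∈ S, ¬ primeIdeal p ∣ primeIdeal q * I) ↔ ∀ p ∈ S, ¬ primeIdeal p ∣ I := by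
        refine forall₂_congr fun p hp => not_congr ⟨fun h => ?_, fun h => h.mul_left _⟩
        refine (hprime p _ _ h).resolve_left fun h' => ?_
        rw [nonZeroDivisors_dvd_iff_dvd_coe] at h'
        have h2 : q.asIdeal ≤ p.asIdeal := Ideal.le_of_dvd h'
        have h3 : q.asIdeal = p.asIdeal :=
          (q.isPrime.isMaximal q.ne_bot).eq_of_le p.isPrime.ne_top h2
        exact hq (by rwa [HeightOneSpectrum.ext h3])
      simp only [hg, this]
      split_ifs <;> simp
    rw [Finset.prod_insert hq, mul_assoc, ih, sub_mul, one_mul, ← tsum_mul_left]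
    change ∑' I, g I - ∑' I, f (primeIdeal q) * g I = _
    simp_rw [hqg]
    have h1 : ∑' I, g (primeIdeal q * I) =
        ∑' I, if primeIdeal q ∣ I then g I else 0 := by
      rw [← hinj.tsum_eq (f := fun I => if primeIdeal q ∣ I then g I else 0)]
      · simp
      · intro I hI
        simp only [Function.mem_support, ne_eq, ite_eq_right_iff, not_forall] at hI
        obtain ⟨⟨J, hJ⟩, -⟩ := hI
        exact ⟨J, hJ.symm⟩
    have hs2 : Summable fun I => if primeIdeal q ∣ I then g I else 0 := by
      refine Summable.of_norm_bounded hgs.norm fun I => ?_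
      split_ifs <;> simp
    rw [h1, ← hgs.tsum_sub hs2]
    congr 1
    ext I
    simp only [hg, Finset.forall_mem_insert]
    by_cases h1 : primeIdeal q ∣ I <;> by_cases h2 : ∀ p ∈ S, ¬ primeIdeal p ∣ I <;>
      simp only [h1, h2, if_true, if_false, not_true_eq_false, not_false_eq_true, false_and,
        true_and, and_false, sub_zero, sub_self]

/-- The Euler product of a completely multiplicative summable function on ideals. -/
lemma tendsto_prod_one_sub_mul_tsum (f : (Ideal R)⁰ →* ℝ) (hf : Summable f) :
    Tendsto (fun S : Finset (HeightOneSpectrum R) =>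
      (∏ p ∈ S, (1 - f (primeIdeal p))) * ∑' I, f I) atTop (𝓝 1) := by
  simp_rw [prod_one_sub_mul_tsum f hf]
  have h1 : ∑' I : (Ideal R)⁰, (if I = 1 then (1 : ℝ) else 0) = 1 := tsum_ite_eq 1 _
  rw [← h1]
  refine tendsto_tsum_of_dominated_convergence hf.norm (fun I => ?_)
    (Eventually.of_forall fun S I => ?_)
  · by_cases hI : I = 1
    · subst hI
      have : ∀ p : HeightOneSpectrum R, ¬ primeIdeal p ∣ (1 : (Ideal R)⁰) := fun p h => by
        rw [nonZeroDivisors_dvd_iff_dvd_coe] at h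
        exact p.prime.not_isUnit (isUnit_of_dvd_one h)
      simp [this]
    · rw [if_neg hI]
      have hne : (I : Ideal R) ≠ ⊤ := fun h => hI (Subtype.ext (h.trans Ideal.one_eq_top.symm))
      obtain ⟨M, hM, hIM⟩ := Ideal.exists_le_maximal _ hne
      have hM0 : M ≠ ⊥ := by
        rintro rfl
        exact nonZeroDivisors.ne_zero I.2 (le_bot_iff.1 hIM)
      refine tendsto_const_nhds.congr' ?_
      filter_upwards [eventually_ge_atTop {(⟨M, hM.isPrime, hM0⟩ : HeightOneSpectrum R)}] with S hS
      rw [if_neg]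
      push Not
      refine ⟨_, hS (Finset.mem_singleton_self _), ?_⟩
      rw [nonZeroDivisors_dvd_iff_dvd_coe]
      exact Ideal.dvd_iff_le.2 hIM
  · split_ifs <;> simp

end EulerProduct

/-! ### Zeta functions and quadratic class group characters as sums over ideals -/

section ZetaSum

open scoped Classical nonZeroDivisors Topology
open IsDedekindDomain Filter NumberField

variable {L : Type*} [Field L] [NumberField L]

/-- The completely multiplicative function `I ↦ N I ^ (-s)` on nonzero integral ideals. -/
noncomputable def normPow (L : Type*) [Field L] [NumberField L] (s : ℝ) : (Ideal (𝓞 L))⁰ →* ℝ where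
  toFun I := (Ideal.absNorm (I : Ideal (𝓞 L)) : ℝ) ^ (-s)
  map_one' := by simp
  map_mul' I J := by
    simp [Real.mul_rpow]

lemma normPow_apply (s : ℝ) (I : (Ideal (𝓞 L))⁰) :
    normPow L s I = (Ideal.absNorm (I : Ideal (𝓞 L)) : ℝ) ^ (-s) := rfl

lemma normPow_pos (s : ℝ) (I : (Ideal (𝓞 L))⁰) : 0 < normPow L s I := by
  have : (0 : ℝ) < Ideal.absNorm (I : Ideal (𝓞 L)) := by
    exact_mod_cast Ideal.absNorm_pos_of_nonZeroDivisors I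
  rw [normPow_apply]
  positivity

lemma summable_normPow_and_tsum {s : ℝ}
    (h : LSeriesSummable (fun n ↦ (Nat.card {I : Ideal (𝓞 L) // Ideal.absNorm I = n} : ℂ)) s) :
    Summable (normPow L s) ∧ dedekindZeta L s = ((∑' I, normPow L s I : ℝ) : ℂ) := by
  let N : (Ideal (𝓞 L))⁰ → ℕ := fun I => Ideal.absNorm (I : Ideal (𝓞 L))
  have hfin : ∀ n, Finite {I : (Ideal (𝓞 L))⁰ // N I = n} := fun n => by
    have : Finite {I : Ideal (𝓞 L) // Ideal.absNorm I = n} :=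
      (Ideal.finite_setOfPred_absNorm_eq n).to_subtype
    exact Finite.of_injective
      (fun I => (⟨I.1.1, I.2⟩ : {I : Ideal (𝓞 L) // Ideal.absNorm I = n}))
      fun I J hIJ => Subtype.ext (Subtype.ext (by simpa using hIJ))
  have hterm : ∀ n, LSeries.term
      (fun n ↦ (Nat.card {I : Ideal (𝓞 L) // Ideal.absNorm I = n} : ℂ)) s n =
      ((∑' I : {I : (Ideal (𝓞 L))⁰ // N I = n}, normPow L s I : ℝ) : ℂ) := by
    intro n
    have h1 : ∀ I : {I : (Ideal (𝓞 L))⁰ // N I = n}, normPow L s I = (n : ℝ) ^ (-s) := by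
      rintro ⟨I, rfl⟩
      rfl
    simp_rw [h1, tsum_const, nsmul_eq_mul]
    rcases eq_or_ne n 0 with rfl | hn
    · have : IsEmpty {I : (Ideal (𝓞 L))⁰ // N I = 0} :=
        ⟨fun I => (Ideal.absNorm_pos_of_nonZeroDivisors I.1).ne' I.2⟩
      simp
    · have h2 : Nat.card {I : Ideal (𝓞 L) // Ideal.absNorm I = n} =
          Nat.card {I : (Ideal (𝓞 L))⁰ // N I = n} := by
        refine Nat.card_congr ⟨fun I => ⟨⟨I.1, mem_nonZeroDivisors_of_ne_zero ?_⟩, I.2⟩,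
          fun I => ⟨I.1.1, I.2⟩, fun _ => rfl, fun _ => rfl⟩
        intro h0
        have := I.2
        rw [h0, Ideal.zero_eq_bot, Ideal.absNorm_bot] at this
        exact hn this.symm
      rw [LSeries.term_of_ne_zero hn, h2]
      push_cast
      rw [Complex.ofReal_cpow (by positivity)]
      push_cast
      rw [Complex.cpow_neg, div_eq_mul_inv]
  have hsig : Summable fun n => ∑' I : {I : (Ideal (𝓞 L))⁰ // N I = n}, normPow L s I := by
    have := h
    rw [LSeriesSummable, funext hterm] at this
    exact Complex.summable_ofReal.1 this
  have hs : Summable (normPow L s) := by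
    rw [← (Equiv.sigmaFiberEquiv N).summable_iff]
    refine (summable_sigma_of_nonneg fun x => (normPow_pos s _).le).2 ⟨fun n => ?_, hsig⟩
    exact Summable.of_finite
  refine ⟨hs, ?_⟩
  rw [dedekindZeta, LSeries, funext hterm, ← Complex.ofReal_tsum]
  congr 1
  rw [← (Equiv.sigmaFiberEquiv N).tsum_eq]
  exact (Summable.tsum_sigma' (fun n => Summable.of_finite)
    ((Equiv.sigmaFiberEquiv N).summable_iff.2 hs)).symm

/-- Near `1` on the right, the Dedekind zeta function is the sum of `N I ^ (-s)` over nonzero ideals.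
Convergence is read off from the nonzero residue: a divergent series would have the value `0`. -/
lemma eventually_dedekindZeta_eq : ∀ᶠ s : ℝ in 𝓝[>] 1,
    Summable (normPow L s) ∧ dedekindZeta L s = ((∑' I, normPow L s I : ℝ) : ℂ) := by
  have h0 : (dedekindZeta_residue L : ℂ) ≠ 0 := by exact_mod_cast dedekindZeta_residue_ne_zero L
  filter_upwards [(tendsto_sub_one_mul_dedekindZeta_nhdsGT L).eventually_ne h0] with s hs
  refine summable_normPow_and_tsum ?_
  by_contra h
  refine hs ?_
  rw [dedekindZeta, LSeries, tsum_eq_zero_of_not_summable h, mul_zero]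

lemma tendsto_sub_one_mul_tsum_normPow :
    Tendsto (fun s : ℝ => (s - 1) * ∑' I, normPow L s I) (𝓝[>] 1) (𝓝 (dedekindZeta_residue L)) := by
  have h := (Complex.continuous_re.tendsto _).comp (tendsto_sub_one_mul_dedekindZeta_nhdsGT L)
  rw [Complex.ofReal_re] at h
  refine h.congr' ?_
  filter_upwards [eventually_dedekindZeta_eq (L := L)] with s hs
  rw [Function.comp_apply, hs.2]
  norm_cast

/-- The completely multiplicative function `I ↦ χ(I) N I ^ (-s)` attached to a quadratic character
`χ` of the class group. -/
noncomputable def charPow (χ : ClassGroup (𝓞 L) →* ℤˣ) (s : ℝ) : (Ideal (𝓞 L))⁰ →* ℝ :=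
  (((Int.castRingHom ℝ : ℤ →* ℝ).comp (Units.coeHom ℤ)).comp (χ.comp ClassGroup.mk0)) * normPow L s

lemma charPow_apply (χ : ClassGroup (𝓞 L) →* ℤˣ) (s : ℝ) (I : (Ideal (𝓞 L))⁰) :
    charPow χ s I = ((χ (ClassGroup.mk0 I) : ℤ) : ℝ) * normPow L s I := rfl

lemma abs_charPow (χ : ClassGroup (𝓞 L) →* ℤˣ) (s : ℝ) (I : (Ideal (𝓞 L))⁰) :
    |charPow χ s I| = normPow L s I := by
  rw [charPow_apply, abs_mul, abs_of_pos (normPow_pos s I)]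
  rcases Int.units_eq_one_or (χ (ClassGroup.mk0 I)) with h | h <;> simp [h]

lemma summable_charPow (χ : ClassGroup (𝓞 L) →* ℤˣ) {s : ℝ} (hs : Summable (normPow L s)) :
    Summable (charPow χ s) :=
  Summable.of_norm (by simpa only [Real.norm_eq_abs, abs_charPow] using hs)

/-- The `L`-series of a nontrivial quadratic class group character stays bounded at `s = 1`, since
the partial zeta functions of two classes have bounded difference. -/
lemma exists_abs_tsum_charPow_le (χ : ClassGroup (𝓞 L) →* ℤˣ) (hχ : χ ≠ 1) :
    ∃ B : ℝ, ∀ s, 1 < s → s ≤ 2 → Summable (normPow L s) → |∑' I, charPow χ s I| ≤ B := by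
  choose B hB using fun C C' : ClassGroup (𝓞 L) => partialZeta_le C C'
  refine ⟨∑ C : ClassGroup (𝓞 L), max (max (B C 1) (B 1 C)) 0, fun s h1 h2 hs => ?_⟩
  let Z : ClassGroup (𝓞 L) → ℝ := fun C =>
    ∑' I : {I : (Ideal (𝓞 L))⁰ // ClassGroup.mk0 I = C}, normPow L s I
  have hZ0 : ∀ C, 0 ≤ Z C := fun C => tsum_nonneg fun I => (normPow_pos s _).le
  have hZ : ∀ C, partialZeta C s = ENNReal.ofReal (Z C) := fun C =>
    (ENNReal.ofReal_tsum_of_nonneg (fun I => (normPow_pos s _).le) (hs.subtype _)).symm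
  have hle : ∀ C C', Z C ≤ Z C' + max (B C C') 0 := by
    intro C C'
    have := hB C C' s h1 h2
    rw [hZ, hZ] at this
    replace this := this.trans (add_le_add_right
      (ENNReal.ofReal_le_ofReal (le_max_left (B C C') 0)) _)
    rwa [← ENNReal.ofReal_add (hZ0 _) (le_max_right _ _),
      ENNReal.ofReal_le_ofReal_iff (add_nonneg (hZ0 C') (le_max_right _ _))] at this
  have hsum : ∑' I, charPow χ s I = ∑ C, ((χ C : ℤ) : ℝ) * Z C := by
    rw [← (Equiv.sigmaFiberEquiv fun I : (Ideal (𝓞 L))⁰ => ClassGroup.mk0 I).tsum_eq]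
    refine (Summable.tsum_sigma' (fun C => ?_)
      ((Equiv.sigmaFiberEquiv fun I : (Ideal (𝓞 L))⁰ => ClassGroup.mk0 I).summable_iff.2
        (summable_charPow χ hs))).trans ?_
    · exact (summable_charPow χ hs).subtype _
    · rw [tsum_fintype]
      refine Finset.sum_congr rfl fun C _ => ?_
      rw [← tsum_mul_left]
      refine tsum_congr fun I => ?_
      obtain ⟨I, rfl⟩ := I
      exact charPow_apply _ _ _
  have hχ0 : ∑ C, ((χ C : ℤ) : ℝ) = 0 := by
    refine sum_hom_units_eq_zero
      (((Int.castRingHom ℝ : ℤ →* ℝ).comp (Units.coeHom ℤ)).comp χ) fun h => hχ ?_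
    ext C
    have := DFunLike.congr_fun h C
    simpa using this
  have hsub : ∑' I, charPow χ s I = ∑ C, ((χ C : ℤ) : ℝ) * (Z C - Z 1) := by
    simp_rw [mul_sub, Finset.sum_sub_distrib, ← Finset.sum_mul, hχ0, zero_mul, sub_zero, hsum]
  rw [hsub]
  refine (Finset.abs_sum_le_sum_abs _ _).trans (Finset.sum_le_sum fun C _ => ?_)
  have hχa : |((χ C : ℤ) : ℝ)| = 1 := by
    rcases Int.units_eq_one_or (χ C) with h | h <;> simp [h]
  rw [abs_mul, hχa, one_mul, abs_le]
  have := hle C 1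
  have := hle 1 C
  have : max (B C 1) 0 ≤ max (max (B C 1) (B 1 C)) 0 := max_le_max_right _ (le_max_left _ _)
  have : max (B 1 C) 0 ≤ max (max (B C 1) (B 1 C)) 0 := max_le_max_right _ (le_max_right _ _)
  constructor <;> linarith

end ZetaSum

/-! ### Quadratic characters and Euler factors -/

section QuadraticCharacters

/-- The local comparison of Euler factors: `x = N p ^ (-s)`, the index set is the set of primes
above `p`, `f` their residue degrees, and `e₁`, `e₂` the values of two characters at `p`. -/
lemma euler_factor_le {ι : Type*} (T : Finset ι) (f : ι → ℕ) (hf : ∀ i ∈ T, 1 ≤ f i)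
    (hsum : ∑ i ∈ T, f i ≤ 2) {x : ℝ} (hx0 : 0 ≤ x) (hx1 : x ≤ 1) (e₁ e₂ : ℤˣ)
    (h1 : ∀ i ∈ T, f i = 1 → e₁ = 1 ∧ e₂ = 1) :
    (1 - x) * (1 - (e₁ : ℤ) * x) * (1 - (e₂ : ℤ) * x) * (1 - ((e₁ * e₂ : ℤˣ) : ℤ) * x) ≤
      (∏ i ∈ T, (1 - x ^ f i)) ^ 2 := by
  by_cases h : e₁ = 1 ∧ e₂ = 1
  · obtain ⟨rfl, rfl⟩ := h
    have hle : (1 - x) ^ 2 ≤ ∏ i ∈ T, (1 - x ^ f i) :=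
      calc (1 - x) ^ 2 ≤ (1 - x) ^ ∑ i ∈ T, f i :=
            pow_le_pow_of_le_one (by linarith) (by linarith) hsum
        _ = ∏ i ∈ T, (1 - x) ^ f i := (Finset.prod_pow_eq_pow_sum _ _ _).symm
        _ ≤ ∏ i ∈ T, (1 - x ^ f i) := by
            refine Finset.prod_le_prod (fun i _ => pow_nonneg (by linarith) _) fun i hi => ?_
            have ha : (1 - x) ^ f i ≤ (1 - x) ^ 1 :=
              pow_le_pow_of_le_one (by linarith) (by linarith) (hf i hi)
            have hb : x ^ f i ≤ x ^ 1 := pow_le_pow_of_le_one hx0 hx1 (hf i hi)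
            rw [pow_one] at ha hb
            linarith
    calc _ = ((1 - x) ^ 2) ^ 2 := by push_cast; ring
      _ ≤ _ := pow_le_pow_left₀ (by positivity) hle 2
  · have h2 : ∀ i ∈ T, 2 ≤ f i := fun i hi => by
      have := hf i hi
      have : f i ≠ 1 := fun hi1 => h (h1 i hi hi1)
      omega
    have hcard : T.card ≤ 1 := by
      have : T.card • 2 ≤ ∑ i ∈ T, f i := Finset.card_nsmul_le_sum _ _ _ h2
      rw [smul_eq_mul] at this
      omega
    have hx2 : x ^ 2 ≤ 1 := pow_le_one₀ hx0 hx1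
    have hle : 1 - x ^ 2 ≤ ∏ i ∈ T, (1 - x ^ f i) :=
      calc 1 - x ^ 2 = (1 - x ^ 2) ^ 1 := (pow_one _).symm
        _ ≤ (1 - x ^ 2) ^ T.card :=
            pow_le_pow_of_le_one (by linarith) (by linarith [sq_nonneg x]) hcard
        _ ≤ ∏ i ∈ T, (1 - x ^ f i) := by
            rw [← Finset.prod_const]
            refine Finset.prod_le_prod (fun i _ => by linarith) fun i hi => ?_
            have hb : x ^ f i ≤ x ^ 2 := pow_le_pow_of_le_one hx0 hx1 (h2 i hi)
            linarith
    calc _ = (1 - x ^ 2) ^ 2 := by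
            rcases Int.units_eq_one_or e₁ with rfl | rfl <;>
              rcases Int.units_eq_one_or e₂ with rfl | rfl
            · exact absurd ⟨rfl, rfl⟩ h
            all_goals push_cast; ring
      _ ≤ _ := pow_le_pow_left₀ (by linarith) hle 2

lemma hasEnoughRootsOfUnity_int_of_dvd_two {n : ℕ} (hn : n ∣ 2) : HasEnoughRootsOfUnity ℤ n := by
  rcases (Nat.dvd_prime Nat.prime_two).1 hn with rfl | rfl
  · exact ⟨⟨1, IsPrimitiveRoot.one⟩, inferInstance⟩
  · exact ⟨⟨-1, IsPrimitiveRoot.neg_one 0 (by decide)⟩, inferInstance⟩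

/-- A subgroup of index larger than two that contains all squares lies in the kernel of two
distinct nontrivial quadratic characters. -/
lemma exists_quadratic_characters {A : Type*} [CommGroup A] [Finite A] (H : Subgroup A)
    (hsq : ∀ a : A, a ^ 2 ∈ H) (hH : 2 < H.index) :
    ∃ χ₁ χ₂ : A →* ℤˣ, χ₁ ≠ 1 ∧ χ₂ ≠ 1 ∧ χ₁ * χ₂ ≠ 1 ∧ ∀ a ∈ H, χ₁ a = 1 ∧ χ₂ a = 1 := by
  have hexp : Monoid.exponent (A ⧸ H) ∣ 2 := by
    refine Monoid.exponent_dvd_of_forall_pow_eq_one fun q => ?_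
    induction q using QuotientGroup.induction_on with
    | H a => exact (QuotientGroup.eq_one_iff _).2 (hsq a)
  have := hasEnoughRootsOfUnity_int_of_dvd_two hexp
  have hcard : 2 < Nat.card (A ⧸ H) := hH
  have : Nontrivial (A ⧸ H) := Finite.one_lt_card_iff_nontrivial.1 (by omega)
  obtain ⟨a, ha⟩ := exists_ne (1 : A ⧸ H)
  obtain ⟨ψ₁, h₁⟩ := CommGroup.exists_apply_ne_one_of_hasEnoughRootsOfUnity (A ⧸ H) ℤ ha
  have hker : ψ₁.ker ≠ ⊥ := by
    intro h
    have hinj : Function.Injective ψ₁ := (MonoidHom.ker_eq_bot_iff ψ₁).1 h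
    have := Nat.card_le_card_of_injective ψ₁ hinj
    rw [Nat.card_eq_fintype_card (α := ℤˣ)] at this
    have h2 : Fintype.card ℤˣ = 2 := rfl
    omega
  obtain ⟨⟨b, hb⟩, hb1⟩ := Subgroup.ne_bot_iff_exists_ne_one.1 hker
  obtain ⟨ψ₂, h₂⟩ := CommGroup.exists_apply_ne_one_of_hasEnoughRootsOfUnity (A ⧸ H) ℤ
    (a := b) fun h => hb1 (Subtype.ext h)
  obtain ⟨a, rfl⟩ := QuotientGroup.mk_surjective a
  obtain ⟨b, rfl⟩ := QuotientGroup.mk_surjective b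
  refine ⟨ψ₁.comp (QuotientGroup.mk' H), ψ₂.comp (QuotientGroup.mk' H),
    fun h => h₁ (DFunLike.congr_fun h a), fun h => h₂ (DFunLike.congr_fun h b),
    fun h => h₂ ?_, fun x hx => ?_⟩
  · have h3 : ψ₁ b * ψ₂ b = 1 := DFunLike.congr_fun h b
    rwa [MonoidHom.mem_ker.1 hb, one_mul] at h3
  · have : (x : A ⧸ H) = 1 := (QuotientGroup.eq_one_iff x).2 hx
    simp [this]

end QuadraticCharacters

/-! ### The norm on class groups -/

section ClassNorm

open scoped nonZeroDivisors
open NumberField IsDedekindDomain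

variable {k L : Type*} [Field k] [NumberField k] [Field L] [NumberField L] [Algebra k L]

/-- The relative norm on nonzero integral ideals. -/
noncomputable def relNorm₀ (k : Type*) {L : Type*} [Field k] [NumberField k] [Field L]
    [NumberField L] [Algebra k L] : (Ideal (𝓞 L))⁰ →* (Ideal (𝓞 k))⁰ where
  toFun I := ⟨Ideal.relNorm (𝓞 k) (I : Ideal (𝓞 L)), mem_nonZeroDivisors_of_ne_zero fun h =>
    nonZeroDivisors.ne_zero I.2 (Ideal.relNorm_eq_bot_iff.1 h)⟩
  map_one' := Subtype.ext (map_one (Ideal.relNorm (𝓞 k)))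
  map_mul' I J := Subtype.ext (map_mul (Ideal.relNorm (𝓞 k)) (I : Ideal (𝓞 L)) J)

lemma coe_relNorm₀ (I : (Ideal (𝓞 L))⁰) :
    (relNorm₀ k I : Ideal (𝓞 k)) = Ideal.relNorm (𝓞 k) (I : Ideal (𝓞 L)) := rfl

lemma mk0_relNorm₀_eq {I J : (Ideal (𝓞 L))⁰} (h : ClassGroup.mk0 I = ClassGroup.mk0 J) :
    ClassGroup.mk0 (relNorm₀ k I) = ClassGroup.mk0 (relNorm₀ k J) := by
  obtain ⟨x, y, hx, hy, hxy⟩ := ClassGroup.mk0_eq_mk0_iff.1 h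
  refine ClassGroup.mk0_eq_mk0_iff.2 ⟨Algebra.intNorm (𝓞 k) (𝓞 L) x,
    Algebra.intNorm (𝓞 k) (𝓞 L) y, Algebra.intNorm_ne_zero.2 hx, Algebra.intNorm_ne_zero.2 hy, ?_⟩
  have := congrArg (Ideal.relNorm (𝓞 k)) hxy
  rwa [map_mul, map_mul, Ideal.relNorm_singleton, Ideal.relNorm_singleton] at this

/-- The norm map on ideal class groups. -/
noncomputable def classNorm (k L : Type*) [Field k] [NumberField k] [Field L]
    [NumberField L] [Algebra k L] : ClassGroup (𝓞 L) →* ClassGroup (𝓞 k) where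
  toFun C := ClassGroup.mk0 (relNorm₀ k (ClassGroup.mk0_surjective C).choose)
  map_one' := by
    refine (mk0_relNorm₀_eq (J := 1) ?_).trans (by simp only [map_one])
    rw [(ClassGroup.mk0_surjective _).choose_spec, map_one]
  map_mul' C D := by
    rw [← map_mul, ← map_mul]
    refine mk0_relNorm₀_eq ?_
    rw [map_mul, (ClassGroup.mk0_surjective _).choose_spec, (ClassGroup.mk0_surjective _).choose_spec,
      (ClassGroup.mk0_surjective _).choose_spec]

lemma classNorm_mk0 (I : (Ideal (𝓞 L))⁰) :
    classNorm k L (ClassGroup.mk0 I) = ClassGroup.mk0 (relNorm₀ k I) :=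
  mk0_relNorm₀_eq (ClassGroup.mk0_surjective _).choose_spec

lemma relNorm_map_eq_sq (h2 : Module.finrank k L = 2) (I : Ideal (𝓞 k)) :
    Ideal.relNorm (𝓞 k) (I.map (algebraMap (𝓞 k) (𝓞 L))) = I ^ 2 := by
  rw [Ideal.relNorm_algebraMap, ← IsFractionRing.finrank_eq (𝓞 k) k (𝓞 L) L, h2]

lemma sq_mem_range_classNorm (h2 : Module.finrank k L = 2) (C : ClassGroup (𝓞 k)) :
    C ^ 2 ∈ (classNorm k L).range := by
  obtain ⟨I, rfl⟩ := ClassGroup.mk0_surjective C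
  have hI : (I : Ideal (𝓞 k)).map (algebraMap (𝓞 k) (𝓞 L)) ≠ 0 := fun h =>
    nonZeroDivisors.ne_zero I.2 ((Ideal.map_eq_bot_iff_of_injective
      (FaithfulSMul.algebraMap_injective (𝓞 k) (𝓞 L))).1 h)
  refine ⟨ClassGroup.mk0 ⟨_, mem_nonZeroDivisors_of_ne_zero hI⟩, ?_⟩
  rw [classNorm_mk0, ← map_pow]
  exact congrArg ClassGroup.mk0 (Subtype.ext (relNorm_map_eq_sq h2 _))

end ClassNorm

/-! ### The index of the norms -/

section NormIndex

open scoped nonZeroDivisors Topology Classical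
open NumberField IsDedekindDomain Filter

variable {k L : Type*} [Field k] [NumberField k] [Field L] [NumberField L] [Algebra k L]

lemma normPow_relNorm₀ (s : ℝ) (I : (Ideal (𝓞 L))⁰) :
    normPow k s (relNorm₀ k I) = normPow L s I := by
  rw [normPow_apply, normPow_apply, coe_relNorm₀, Ideal.absNorm_relNorm]

lemma exists_relNorm₀_eq_pow (P : HeightOneSpectrum (𝓞 L)) :
    ∃ n : ℕ, 1 ≤ n ∧ relNorm₀ k (primeIdeal P) = primeIdeal (P.under (𝓞 k)) ^ n := by
  have := P.isPrime
  have : P.asIdeal.LiesOver (P.under (𝓞 k)).asIdeal := ⟨rfl⟩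
  have := (P.under (𝓞 k)).isPrime
  obtain ⟨n, hn⟩ := Ideal.exists_relNorm_eq_pow_of_isPrime P.asIdeal (P.under (𝓞 k)).asIdeal
  refine ⟨n, Nat.one_le_iff_ne_zero.2 ?_, Subtype.ext hn⟩
  rintro rfl
  have h1 := Ideal.relNorm_le_comap (𝓞 k) P.asIdeal
  rw [hn, pow_zero, Ideal.one_eq_top, top_le_iff] at h1
  exact (P.under (𝓞 k)).isPrime.ne_top h1

/-- The residue degree of a prime of `L` over `k`, as the exponent in its relative norm. -/
noncomputable def resDeg (k : Type*) {L : Type*} [Field k] [NumberField k] [Field L]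
    [NumberField L] [Algebra k L] (P : HeightOneSpectrum (𝓞 L)) : ℕ :=
  (exists_relNorm₀_eq_pow (k := k) P).choose

lemma one_le_resDeg (P : HeightOneSpectrum (𝓞 L)) : 1 ≤ resDeg k P :=
  (exists_relNorm₀_eq_pow P).choose_spec.1

lemma relNorm₀_primeIdeal (P : HeightOneSpectrum (𝓞 L)) :
    relNorm₀ k (primeIdeal P) = primeIdeal (P.under (𝓞 k)) ^ resDeg k P :=
  (exists_relNorm₀_eq_pow P).choose_spec.2

/-- The residue degrees above a prime `p` add up to at most `2`, because the product of the primes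
above `p` divides `p`, whose norm from a quadratic extension is `p ^ 2`. -/
lemma sum_resDeg_le (h2 : Module.finrank k L = 2) (p : HeightOneSpectrum (𝓞 k))
    (T : Finset (HeightOneSpectrum (𝓞 L))) (hT : ∀ P ∈ T, P.under (𝓞 k) = p) :
    ∑ P ∈ T, resDeg k P ≤ 2 := by
  have hdvd : ∏ P ∈ T, P.asIdeal ∣ p.asIdeal.map (algebraMap (𝓞 k) (𝓞 L)) := by
    have h := Finset.prod_primes_dvd (s := T.image HeightOneSpectrum.asIdeal)
      (p.asIdeal.map (algebraMap (𝓞 k) (𝓞 L))) ?_ ?_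
    · rwa [Finset.prod_image fun P _ Q _ h => HeightOneSpectrum.ext h] at h
    · intro I hI
      obtain ⟨P, -, rfl⟩ := Finset.mem_image.1 hI
      exact P.prime
    · intro I hI
      obtain ⟨P, hP, rfl⟩ := Finset.mem_image.1 hI
      rw [Ideal.dvd_iff_le, Ideal.map_le_iff_le_comap, ← hT P hP]
      exact le_rfl
  have h3 := map_dvd (Ideal.relNorm (𝓞 k)) hdvd
  rw [relNorm_map_eq_sq h2, map_prod, Finset.prod_congr rfl (g := fun P => p.asIdeal ^ resDeg k P)
    fun P hP => by
      rw [← hT P hP]; exact congrArg Subtype.val (relNorm₀_primeIdeal (k := k) P),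
    Finset.prod_pow_eq_pow_sum] at h3
  exact (pow_dvd_pow_iff p.ne_bot p.prime.not_isUnit).1 h3

lemma normPow_primeIdeal_lt_one {s : ℝ} (hs : 0 < s) (p : HeightOneSpectrum (𝓞 k)) :
    normPow k s (primeIdeal p) < 1 := by
  rw [normPow_apply]
  refine Real.rpow_lt_one_of_one_lt_of_neg ?_ (by linarith)
  have h0 := Ideal.absNorm_pos_of_nonZeroDivisors (primeIdeal p)
  have h1 : Ideal.absNorm (primeIdeal p : Ideal (𝓞 k)) ≠ 1 := fun h =>
    p.isPrime.ne_top (Ideal.absNorm_eq_one_iff.1 h)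
  exact_mod_cast (by omega : 1 < Ideal.absNorm (primeIdeal p : Ideal (𝓞 k)))

lemma one_sub_charPow_primeIdeal_pos {s : ℝ} (hs : 0 < s) (χ : ClassGroup (𝓞 k) →* ℤˣ)
    (p : HeightOneSpectrum (𝓞 k)) : 0 < 1 - charPow χ s (primeIdeal p) := by
  have h1 := normPow_primeIdeal_lt_one hs p
  have h2 := (le_abs_self _).trans_eq (abs_charPow χ s (primeIdeal p))
  linarith

/-- Comparison of finite Euler products for two characters that are trivial on norms. -/
lemma prod_euler_le (h2 : Module.finrank k L = 2) {s : ℝ} (hs : 0 < s)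
    (χ₁ χ₂ : ClassGroup (𝓞 k) →* ℤˣ)
    (hχ : ∀ C ∈ (classNorm k L).range, χ₁ C = 1 ∧ χ₂ C = 1)
    (S : Finset (HeightOneSpectrum (𝓞 k))) (T : Finset (HeightOneSpectrum (𝓞 L)))
    (hST : ∀ P ∈ T, P.under (𝓞 k) ∈ S) :
    ∏ p ∈ S, ((1 - normPow k s (primeIdeal p)) * (1 - charPow χ₁ s (primeIdeal p)) *
      (1 - charPow χ₂ s (primeIdeal p)) * (1 - charPow (χ₁ * χ₂) s (primeIdeal p))) ≤
      (∏ P ∈ T, (1 - normPow L s (primeIdeal P))) ^ 2 := by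
  rw [← Finset.prod_fiberwise_of_maps_to hST, ← Finset.prod_pow]
  refine Finset.prod_le_prod (fun p _ => ?_) fun p _ => ?_
  · have h0 := normPow_primeIdeal_lt_one hs p
    have h1 := one_sub_charPow_primeIdeal_pos hs χ₁ p
    have h2 := one_sub_charPow_primeIdeal_pos hs χ₂ p
    have h3 := one_sub_charPow_primeIdeal_pos hs (χ₁ * χ₂) p
    have h4 : 0 < 1 - normPow k s (primeIdeal p) := by linarith
    positivity
  · have hT : ∀ P ∈ T.filter (fun P => P.under (𝓞 k) = p), P.under (𝓞 k) = p := fun P hP =>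
      (Finset.mem_filter.1 hP).2
    have hle := euler_factor_le _ (resDeg k) (fun P _ => one_le_resDeg P) (sum_resDeg_le h2 p _ hT)
      (normPow_pos s (primeIdeal p)).le (normPow_primeIdeal_lt_one hs p).le
      (χ₁ (ClassGroup.mk0 (primeIdeal p))) (χ₂ (ClassGroup.mk0 (primeIdeal p))) fun P hP hf => by
        -- a prime of residue degree one is a norm
        refine hχ _ ⟨ClassGroup.mk0 (primeIdeal P), ?_⟩
        rw [classNorm_mk0, relNorm₀_primeIdeal, hf, pow_one, hT P hP]
    refine hle.trans_eq (congrArg (· ^ 2) (Finset.prod_congr rfl fun P hP => ?_))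
    rw [← normPow_relNorm₀ (k := k) s (primeIdeal P), relNorm₀_primeIdeal, map_pow, hT P hP]

/-- The resulting inequality `ζ_L(s)² ≤ ζ_k(s) L(s, χ₁) L(s, χ₂) L(s, χ₁χ₂)`. -/
lemma sq_tsum_normPow_le (h2 : Module.finrank k L = 2) {s : ℝ} (hs : 0 < s)
    (hk : Summable (normPow k s)) (hL : Summable (normPow L s))
    (χ₁ χ₂ : ClassGroup (𝓞 k) →* ℤˣ)
    (hχ : ∀ C ∈ (classNorm k L).range, χ₁ C = 1 ∧ χ₂ C = 1) :
    (∑' I, normPow L s I) ^ 2 ≤ (∑' I, normPow k s I) * (∑' I, charPow χ₁ s I) *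
      (∑' I, charPow χ₂ s I) * (∑' I, charPow (χ₁ * χ₂) s I) := by
  set Q := (∑' I, normPow k s I) * (∑' I, charPow χ₁ s I) *
      (∑' I, charPow χ₂ s I) * (∑' I, charPow (χ₁ * χ₂) s I) with hQ
  have hlim : Tendsto (fun S : Finset (HeightOneSpectrum (𝓞 k)) =>
      (∏ p ∈ S, ((1 - normPow k s (primeIdeal p)) * (1 - charPow χ₁ s (primeIdeal p)) *
      (1 - charPow χ₂ s (primeIdeal p)) * (1 - charPow (χ₁ * χ₂) s (primeIdeal p)))) * Q)
      atTop (𝓝 1) := by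
    have := ((((tendsto_prod_one_sub_mul_tsum (normPow k s) hk).mul
      (tendsto_prod_one_sub_mul_tsum _ (summable_charPow χ₁ hk))).mul
      (tendsto_prod_one_sub_mul_tsum _ (summable_charPow χ₂ hk))).mul
      (tendsto_prod_one_sub_mul_tsum _ (summable_charPow (χ₁ * χ₂) hk)))
    simp only [mul_one] at this
    refine this.congr fun S => ?_
    simp only [Finset.prod_mul_distrib, hQ]
    ring
  have hpos : ∀ S : Finset (HeightOneSpectrum (𝓞 k)),
      0 < ∏ p ∈ S, ((1 - normPow k s (primeIdeal p)) * (1 - charPow χ₁ s (primeIdeal p)) *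
      (1 - charPow χ₂ s (primeIdeal p)) * (1 - charPow (χ₁ * χ₂) s (primeIdeal p))) := by
    refine fun S => Finset.prod_pos fun p _ => ?_
    have h0 := normPow_primeIdeal_lt_one hs p
    have h1 := one_sub_charPow_primeIdeal_pos hs χ₁ p
    have h2 := one_sub_charPow_primeIdeal_pos hs χ₂ p
    have h3 := one_sub_charPow_primeIdeal_pos hs (χ₁ * χ₂) p
    have h4 : 0 < 1 - normPow k s (primeIdeal p) := by linarith
    positivity
  have hQ0 : 0 < Q := by
    obtain ⟨S, hS⟩ := (hlim.eventually (lt_mem_nhds zero_lt_one)).exists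
    exact (mul_pos_iff_of_pos_left (hpos S)).1 hS
  have hT : ∀ T : Finset (HeightOneSpectrum (𝓞 L)),
      1 ≤ (∏ P ∈ T, (1 - normPow L s (primeIdeal P))) ^ 2 * Q := by
    intro T
    refine le_of_tendsto hlim ?_
    filter_upwards [eventually_ge_atTop (T.image fun P => P.under (𝓞 k))] with S hS
    exact mul_le_mul_of_nonneg_right (prod_euler_le h2 hs χ₁ χ₂ hχ S T fun P hP =>
      hS (Finset.mem_image_of_mem _ hP)) hQ0.le
  have hlim2 := ((tendsto_prod_one_sub_mul_tsum (normPow L s) hL).pow 2).mul_const Q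
  rw [one_pow, one_mul] at hlim2
  refine ge_of_tendsto' hlim2 fun T => ?_
  have := mul_le_mul_of_nonneg_left (hT T) (sq_nonneg (∑' I, normPow L s I))
  rw [mul_one] at this
  refine this.trans_eq ?_
  ring

/-- The norms have index at most two in the class group. -/
theorem index_range_classNorm_le (h2 : Module.finrank k L = 2) :
    (classNorm k L).range.index ≤ 2 := by
  by_contra! h
  obtain ⟨χ₁, χ₂, h1, h2', h3, hχ⟩ := exists_quadratic_characters (classNorm k L).range
    (sq_mem_range_classNorm h2) h
  obtain ⟨B₁, hB₁⟩ := exists_abs_tsum_charPow_le χ₁ h1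
  obtain ⟨B₂, hB₂⟩ := exists_abs_tsum_charPow_le χ₂ h2'
  obtain ⟨B₃, hB₃⟩ := exists_abs_tsum_charPow_le (χ₁ * χ₂) h3
  have hl := (tendsto_sub_one_mul_tsum_normPow (L := L)).pow 2
  have hid : Tendsto (fun s : ℝ => s - 1) (𝓝[>] 1) (𝓝 0) := by
    have : Tendsto (fun s : ℝ => s - 1) (𝓝 1) (𝓝 (1 - 1)) := tendsto_id.sub_const 1
    rw [sub_self] at this
    exact this.mono_left nhdsWithin_le_nhds
  have hr := (hid.mul (tendsto_sub_one_mul_tsum_normPow (L := k))).mul_const (B₁ * B₂ * B₃)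
  rw [zero_mul, zero_mul] at hr
  have hle := le_of_tendsto_of_tendsto hl hr ?_
  · have := dedekindZeta_residue_pos L
    exact absurd hle (not_le.2 (by positivity))
  filter_upwards [eventually_dedekindZeta_eq (L := k), eventually_dedekindZeta_eq (L := L),
    self_mem_nhdsWithin, nhdsWithin_le_nhds (Iic_mem_nhds (one_lt_two : (1 : ℝ) < 2))]
    with s hk hL hs1 hs2
  have hs1 : 1 < s := hs1
  have hs2 : s ≤ 2 := hs2
  have ha := hB₁ s hs1 hs2 hk.1
  have hb := hB₂ s hs1 hs2 hk.1
  have hc := hB₃ s hs1 hs2 hk.1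
  have hZ : 0 ≤ ∑' I, normPow k s I := tsum_nonneg fun I => (normPow_pos s I).le
  have hprod : (∑' I, normPow L s I) ^ 2 ≤ (∑' I, normPow k s I) * (B₁ * B₂ * B₃) := by
    refine (sq_tsum_normPow_le h2 (by linarith) hk.1 hL.1 χ₁ χ₂ hχ).trans ?_
    rw [mul_assoc, mul_assoc]
    refine mul_le_mul_of_nonneg_left ((le_abs_self _).trans ?_) hZ
    rw [abs_mul, abs_mul, mul_assoc]
    gcongr
    · exact (abs_nonneg _).trans ha
    · exact (abs_nonneg _).trans hb
  have := mul_le_mul_of_nonneg_left hprod (sq_nonneg (s - 1))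
  linarith

end NormIndex

/-! ### Units modulo squares and the kernel of the norm -/

section UnitSquares

open NumberField

/-- If a finite family generates an abelian group, then the group modulo squares is no larger than
the power set of the index set. -/
lemma index_squares_le {A ι : Type*} [CommGroup A] [Fintype ι] (g : ι → A)
    (hg : ∀ x, ∃ e : ι → ℤ, x = ∏ i, g i ^ e i) :
    Finite (A ⧸ (powMonoidHom 2 : A →* A).range) ∧
      Nat.card (A ⧸ (powMonoidHom 2 : A →* A).range) ≤ 2 ^ Fintype.card ι := by
  classical
  have hs : Function.Surjective fun s : Finset ι =>
      ((∏ i ∈ s, g i : A) : A ⧸ (powMonoidHom 2 : A →* A).range) := by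
    intro q
    obtain ⟨x, rfl⟩ := QuotientGroup.mk_surjective q
    obtain ⟨e, rfl⟩ := hg x
    refine ⟨Finset.univ.filter fun i => Odd (e i),
      QuotientGroup.eq.2 ⟨∏ i, g i ^ (e i / 2), eq_inv_mul_of_mul_eq ?_⟩⟩
    rw [powMonoidHom_apply, ← Finset.prod_pow, Finset.prod_filter, ← Finset.prod_mul_distrib]
    refine Finset.prod_congr rfl fun i _ => ?_
    rw [← zpow_natCast, ← zpow_mul]
    split_ifs with h
    · rw [← zpow_one_add]
      congr 1
      have := Int.odd_iff.1 h
      push_cast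
      omega
    · rw [one_mul]
      congr 1
      have := Int.even_iff.1 (Int.not_odd_iff_even.1 h)
      push_cast
      omega
  refine ⟨Finite.of_surjective _ hs, (Nat.card_le_card_of_surjective _ hs).trans_eq ?_⟩
  rw [Nat.card_eq_fintype_card, Fintype.card_finset]

/-- By Dirichlet's unit theorem the units of a totally real field are generated by `rank + 1 = d`
elements, namely a root of unity and a fundamental system. -/
lemma units_index_squares_le {k : Type*} [Field k] [NumberField k]
    (hreal : ∀ v : InfinitePlace k, v.IsReal) :
    Finite ((𝓞 k)ˣ ⧸ (powMonoidHom 2 : (𝓞 k)ˣ →* (𝓞 k)ˣ).range) ∧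
      Nat.card ((𝓞 k)ˣ ⧸ (powMonoidHom 2 : (𝓞 k)ˣ →* (𝓞 k)ˣ).range) ≤
        2 ^ Module.finrank ℚ k := by
  obtain ⟨ζ, hζ⟩ := IsCyclic.exists_generator (α := Units.torsion k)
  have hrank : Units.rank k + 1 = Module.finrank ℚ k := by
    have : IsTotallyReal k := ⟨hreal⟩
    have h1 := IsTotallyReal.finrank k
    have h2 := InfinitePlace.card_eq_nrRealPlaces_add_nrComplexPlaces k
    have h3 := (nrComplexPlaces_eq_zero_iff (K := k)).2 this
    have h4 : 0 < Module.finrank ℚ k := Module.finrank_pos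
    rw [Units.rank]
    omega
  have := index_squares_le (A := (𝓞 k)ˣ) (ι := Option (Fin (Units.rank k)))
    (fun o => o.elim (ζ : (𝓞 k)ˣ) (Units.fundSystem k)) fun x => by
      obtain ⟨⟨z, e⟩, hx, -⟩ := Units.exist_unique_eq_mul_prod k x
      obtain ⟨n, rfl⟩ := Subgroup.mem_zpowers_iff.1 (hζ z)
      refine ⟨fun o => o.elim n e, ?_⟩
      rw [Fintype.prod_option]
      simpa using hx
  simpa [hrank] using this

end UnitSquares

section NormKernel

open NumberField

/-- The norm on class groups has kernel of order at most `2 h(L) / h(k)`, as its cokernel has order at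
most two. -/
lemma card_ker_classNorm_mul_le {k L : Type*} [Field k] [NumberField k] [Field L] [NumberField L]
    [Algebra k L] (h2 : Module.finrank k L = 2) :
    Nat.card (classNorm k L).ker * classNumber k ≤ 2 * classNumber L := by
  have h1 : Nat.card (classNorm k L).ker * Nat.card (classNorm k L).range = classNumber L := by
    rw [← Subgroup.index_ker, Subgroup.card_mul_index, Nat.card_eq_fintype_card, classNumber]
  have h3 : Nat.card (classNorm k L).range * (classNorm k L).range.index = classNumber k := by
    rw [Subgroup.card_mul_index, Nat.card_eq_fintype_card, classNumber]
  rw [← h3, ← mul_assoc, h1, mul_comm]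
  exact Nat.mul_le_mul_right _ (index_range_classNorm_le h2)

end NormKernel

/-! ### Pairs of an ideal and a generator of its norm -/

section Pairs

set_option linter.unusedSectionVars false

open scoped nonZeroDivisors

variable {F K}

/-- For a quadratic extension with nontrivial automorphism `c`, the norm of `x` is `x * c x`. -/
lemma algebraMap_norm_eq_mul_conj (h2 : Module.finrank F K = 2) (c : K ≃ₐ[F] K)
    (hc : c ≠ AlgEquiv.refl) (x : K) : algebraMap F K (Algebra.norm F x) = x * c x := by
  classical
  have h1 : ({AlgEquiv.refl, c} : Finset (K ≃ₐ[F] K)).card = 2 := Finset.card_pair hc.symm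
  have h3 : Fintype.card (K ≃ₐ[F] K) ≤ 2 := h2 ▸ AlgEquiv.card_le
  have h4 : ({AlgEquiv.refl, c} : Finset (K ≃ₐ[F] K)) = Finset.univ :=
    Finset.eq_univ_of_card _ (le_antisymm (Finset.card_le_univ _) (h3.trans_eq h1.symm))
  have h5 : Nat.card (K ≃ₐ[F] K) = Module.finrank F K := by
    rw [h2, ← h1, h4, Finset.card_univ, Nat.card_eq_fintype_card]
  have : IsGalois F K := IsGalois.of_card_aut_eq_finrank F K h5
  rw [Algebra.norm_eq_prod_automorphisms, ← h4, Finset.prod_pair hc.symm]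
  rfl

/-- Scaling `J` by `α` scales `normSpan` by the norm of `α`. -/
lemma normSpan_spanSingleton_mul {c : K ≃ₐ[F] K}
    (hN : ∀ x : K, algebraMap F K (Algebra.norm F x) = x * c x) (α : K)
    (J : FractionalIdeal (𝓞 K)⁰ K) :
    normSpan F K c (FractionalIdeal.spanSingleton (𝓞 K)⁰ α * J) =
      (normSpan F K c J).map (LinearMap.mulLeft (𝓞 F) (Algebra.norm F α)) := by
  rw [normSpan, normSpan, Submodule.map_span]
  congr 1
  ext x
  simp only [Set.mem_image, Set.mem_ofPred_eq, FractionalIdeal.mem_coe, LinearMap.mulLeft_apply]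
  constructor
  · rintro ⟨β, hβ, hx⟩
    obtain ⟨γ, hγ, rfl⟩ := FractionalIdeal.mem_singleton_mul.1 hβ
    refine ⟨Algebra.norm F γ, ⟨γ, hγ, hN γ⟩, (algebraMap F K).injective ?_⟩
    rw [map_mul, hN, hN, hx, map_mul]
    ring
  · rintro ⟨y, ⟨γ, hγ, hy⟩, rfl⟩
    refine ⟨α * γ, FractionalIdeal.mem_singleton_mul.2 ⟨γ, hγ, rfl⟩, ?_⟩
    rw [map_mul, hN, hy, map_mul]
    ring

/-- On integral ideals, `normSpan` is the relative ideal norm. -/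
lemma normSpan_coeIdeal {c : K ≃ₐ[F] K}
    (hN : ∀ x : K, algebraMap F K (Algebra.norm F x) = x * c x) (I : Ideal (𝓞 K)) :
    normSpan F K c (I : FractionalIdeal (𝓞 K)⁰ K) =
      Submodule.map (Algebra.linearMap (𝓞 F) F) (Ideal.relNorm (𝓞 F) I) := by
  have h1 : Ideal.relNorm (𝓞 F) I =
    Submodule.span (𝓞 F) (Algebra.intNorm (𝓞 F) (𝓞 K) '' (I : Set (𝓞 K))) := rfl
  have h2 : ∀ b : 𝓞 K, algebraMap F K (algebraMap (𝓞 F) F (Algebra.intNorm (𝓞 F) (𝓞 K) b)) =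
      algebraMap (𝓞 K) K b * c (algebraMap (𝓞 K) K b) := fun b => by
    rw [Algebra.algebraMap_intNorm (K := F) (L := K), hN]
  rw [h1, normSpan, Submodule.map_span]
  congr 1
  ext x
  simp only [Set.mem_image, Set.mem_ofPred_eq, FractionalIdeal.mem_coe,
    FractionalIdeal.mem_coeIdeal, Algebra.linearMap_apply]
  constructor
  · rintro ⟨β, ⟨b, hb, rfl⟩, hx⟩
    exact ⟨_, ⟨b, hb, rfl⟩, (algebraMap F K).injective ((h2 b).trans hx.symm)⟩
  · rintro ⟨_, ⟨b, hb, rfl⟩, rfl⟩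
    exact ⟨_, ⟨b, hb, rfl⟩, h2 b⟩

/-- The first component of a pair is nonzero, because the span of `u` is, and is therefore a principal
multiple of an integral ideal. -/
lemma exists_integral_representative {c : K ≃ₐ[F] K} (p : pairSet F K c) :
    ∃ (I : (Ideal (𝓞 K))⁰) (x : Kˣ), p.1.1 =
      FractionalIdeal.spanSingleton (𝓞 K)⁰ (x : K) * ((I : Ideal (𝓞 K)) : FractionalIdeal _ K) := by
  have hp : p.1.1 ≠ 0 := by
    intro h
    have hu : normSpan F K c p.1.1 = Submodule.span (𝓞 F) {(p.1.2 : F)} := p.2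
    have h0 : (p.1.2 : F) ∈ normSpan F K c p.1.1 := hu ▸ Submodule.mem_span_singleton_self _
    rw [h, normSpan] at h0
    have h1 : {x : F | ∃ β ∈ ((0 : FractionalIdeal (𝓞 K)⁰ K) : Submodule (𝓞 K) K),
        algebraMap F K x = β * c β} ⊆ {0} := by
      rintro x ⟨β, hβ, hx⟩
      rw [FractionalIdeal.mem_coe, FractionalIdeal.mem_zero_iff] at hβ
      simpa [hβ] using hx
    have h2 := Submodule.span_mono (R := 𝓞 F) h1 h0
    simp at h2
  obtain ⟨a, I, ha, hI⟩ := FractionalIdeal.exists_eq_spanSingleton_mul p.1.1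
  have ha' : (algebraMap (𝓞 K) K a)⁻¹ ≠ 0 :=
    inv_ne_zero fun h => ha ((FaithfulSMul.algebraMap_eq_zero_iff (𝓞 K) K).1 h)
  refine ⟨⟨I, mem_nonZeroDivisors_of_ne_zero ?_⟩, Units.mk0 _ ha', hI⟩
  rintro rfl
  rw [Ideal.zero_eq_bot, FractionalIdeal.coeIdeal_bot, mul_zero] at hI
  exact hp hI

/-- An integral ideal in the class of the first component of a pair. -/
noncomputable def integralRep {c : K ≃ₐ[F] K} (p : pairSet F K c) : (Ideal (𝓞 K))⁰ :=
  (exists_integral_representative p).choose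

lemma exists_eq_spanSingleton_mul_integralRep {c : K ≃ₐ[F] K} (p : pairSet F K c) :
    ∃ x : Kˣ, p.1.1 = FractionalIdeal.spanSingleton (𝓞 K)⁰ (x : K) *
      ((integralRep p : Ideal (𝓞 K)) : FractionalIdeal _ K) :=
  (exists_integral_representative p).choose_spec

lemma norm_ne_zero_of_unit (x : Kˣ) : Algebra.norm F (x : K) ≠ 0 :=
  Algebra.norm_ne_zero_iff.2 x.ne_zero

/-- The ideal class occurring in a pair is killed by the norm. -/
lemma mk0_integralRep_mem_ker {c : K ≃ₐ[F] K}
    (hN : ∀ x : K, algebraMap F K (Algebra.norm F x) = x * c x) (p : pairSet F K c) :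
    ClassGroup.mk0 (integralRep p) ∈ (classNorm F K).ker := by
  obtain ⟨x, hx⟩ := exists_eq_spanSingleton_mul_integralRep p
  have hp : normSpan F K c p.1.1 = Submodule.span (𝓞 F) {(p.1.2 : F)} := p.2
  rw [hx, normSpan_spanSingleton_mul hN, normSpan_coeIdeal hN] at hp
  set N := Ideal.relNorm (𝓞 F) (integralRep p : Ideal (𝓞 K)) with hNdef
  have hmem : (p.1.2 : F) ∈ Submodule.span (𝓞 F) {(p.1.2 : F)} :=
    Submodule.mem_span_singleton_self _
  rw [← hp] at hmem
  obtain ⟨-, ⟨w, hw, rfl⟩, hu⟩ := hmem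
  rw [LinearMap.mulLeft_apply, Algebra.linearMap_apply] at hu
  have hNw : N = Ideal.span {w} := by
    refine Submodule.map_injective_of_injective
      (f := Algebra.linearMap (𝓞 F) F) (FaithfulSMul.algebraMap_injective (𝓞 F) F)
      (Submodule.map_injective_of_injective
        (f := LinearMap.mulLeft (𝓞 F) (Algebra.norm F (x : K)))
        (mul_right_injective₀ (norm_ne_zero_of_unit x)) ?_)
    rw [hp, Ideal.span, Submodule.map_span, Submodule.map_span, Set.image_singleton,
      Set.image_singleton, LinearMap.mulLeft_apply, Algebra.linearMap_apply, hu]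
  rw [MonoidHom.mem_ker, classNorm_mk0]
  exact (ClassGroup.mk0_eq_one_iff _).2 ⟨w, hNw⟩

/-- Two pairs in the same ideal class differ by scaling and a unit of `F`. -/
lemma exists_unit_of_mk0_eq {c : K ≃ₐ[F] K}
    (hN : ∀ x : K, algebraMap F K (Algebra.norm F x) = x * c x) (p q : pairSet F K c)
    (h : ClassGroup.mk0 (integralRep p) = ClassGroup.mk0 (integralRep q)) :
    ∃ (α : Kˣ) (ε : (𝓞 F)ˣ),
      q.1.1 = FractionalIdeal.spanSingleton (𝓞 K)⁰ (α : K) * p.1.1 ∧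
      (q.1.2 : F) = algebraMap (𝓞 F) F ε * Algebra.norm F (α : K) * p.1.2 := by
  obtain ⟨x, hx⟩ := exists_eq_spanSingleton_mul_integralRep p
  obtain ⟨y, hy⟩ := exists_eq_spanSingleton_mul_integralRep q
  obtain ⟨z, hz, hzq⟩ := (ClassGroup.mk0_eq_mk0_iff_exists_fraction_ring (K := K)).1 h
  have hq : q.1.1 = FractionalIdeal.spanSingleton (𝓞 K)⁰
      ((y * Units.mk0 z hz * x⁻¹ : Kˣ) : K) * p.1.1 := by
    rw [hx, hy, ← hzq, ← mul_assoc, ← mul_assoc, FractionalIdeal.spanSingleton_mul_spanSingleton,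
      FractionalIdeal.spanSingleton_mul_spanSingleton, ← Units.val_mul, inv_mul_cancel_right]
    rfl
  refine ⟨y * Units.mk0 z hz * x⁻¹, ?_⟩
  have hp2 : normSpan F K c p.1.1 = Submodule.span (𝓞 F) {(p.1.2 : F)} := p.2
  have hq2 : normSpan F K c q.1.1 = Submodule.span (𝓞 F) {(q.1.2 : F)} := q.2
  rw [hq, normSpan_spanSingleton_mul hN, hp2, Submodule.map_span, Set.image_singleton,
    LinearMap.mulLeft_apply, Submodule.span_singleton_eq_span_singleton] at hq2
  obtain ⟨ε, hε⟩ := hq2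
  refine ⟨ε, hq, ?_⟩
  rw [← hε, Units.smul_def, Algebra.smul_def, ← mul_assoc]

end Pairs

/-! ### The bound for `G_K` -/

/-- Let `F` be a totally real number field of degree `d` and `K` a totally imaginary quadratic
extension of `F`, with `c` the nontrivial element of `Gal(K/F)`.  Then the set `G_K` of pairs
`(J, u)` of a fractional ideal `J` of `K` and a generator `u` of `N_{K/F}(J)`, modulo the
equivalence `(J, u) ∼ ((α)J, α·c(α)·u)`, has cardinality at most `2^{d+1} · h⁻(K)` where
`h⁻(K) = h(K)/h(F)` is the relative class number. -/
theorem card_GK_le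
    (d : ℕ) (hd : Module.finrank ℚ F = d)
    (htotallyReal : ∀ v : InfinitePlace F, v.IsReal)
    (htotallyImaginary : ∀ w : InfinitePlace K, w.IsComplex)
    (hquadratic : Module.finrank F K = 2)
    (c : K ≃ₐ[F] K) (hc : c ≠ AlgEquiv.refl)
    (G : Type) (mk : ↥(pairSet F K c) → G)
    (hsurj : Function.Surjective mk)
    (hmk : ∀ p q : ↥(pairSet F K c), mk p = mk q ↔ pairRel F K c p.val q.val) :
    (Nat.card G : ℝ) ≤ 2 ^ (d + 1) * ((classNumber K : ℝ) / (classNumber F : ℝ)) := by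
  classical
  have hN := algebraMap_norm_eq_mul_conj hquadratic c hc
  obtain ⟨hfin, hunits⟩ := units_index_squares_le htotallyReal
  have hker := card_ker_classNorm_mul_le hquadratic
  set Q := (𝓞 F)ˣ ⧸ (powMonoidHom 2 : (𝓞 F)ˣ →* (𝓞 F)ˣ).range
  have hcard : Nat.card G ≤ Nat.card (classNorm F K).ker * 2 ^ d := by
    rcases isEmpty_or_nonempty (pairSet F K c) with hE | hE
    · have : IsEmpty G := ⟨fun g => hE.elim (hsurj g).choose⟩
      simp
    let cls : pairSet F K c → ClassGroup (𝓞 K) := fun p => ClassGroup.mk0 (integralRep p)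
    -- a base pair in each ideal class that occurs
    let b : pairSet F K c → pairSet F K c := fun p => Function.invFun cls (cls p)
    have hb : ∀ p, cls (b p) = cls p := fun p => Function.invFun_eq ⟨p, rfl⟩
    choose α ε hα hε using fun p => exists_unit_of_mk0_eq hN (b p) p (hb p)
    let r : G → pairSet F K c := fun g => (hsurj g).choose
    have hr : ∀ g, mk (r g) = g := fun g => (hsurj g).choose_spec
    let φ : G → (classNorm F K).ker × Q := fun g =>
      (⟨cls (r g), mk0_integralRep_mem_ker hN (r g)⟩, QuotientGroup.mk (ε (r g)))
    have hφ : Function.Injective φ := by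
      intro g g' h
      obtain ⟨h1, h2⟩ := Prod.ext_iff.1 h
      have h1 : cls (r g) = cls (r g') := congrArg Subtype.val h1
      obtain ⟨η, hη⟩ := QuotientGroup.eq.1 h2
      have hεη : ε (r g') = ε (r g) * η ^ 2 := by
        rw [powMonoidHom_apply] at hη
        rw [hη, mul_inv_cancel_left]
      have hbb : b (r g) = b (r g') := congrArg (Function.invFun cls) h1
      rw [← hr g, ← hr g', hmk]
      -- `η` is a unit, so scaling by it leaves the ideal unchanged and multiplies the
      -- generator by `η ^ 2`
      let ηK : Kˣ := Units.map (algebraMap (𝓞 F) K : 𝓞 F →* K) η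
      have hηF : (ηK : K) = algebraMap F K (algebraMap (𝓞 F) F η) :=
        IsScalarTower.algebraMap_apply (𝓞 F) F K _
      have hηspan : FractionalIdeal.spanSingleton (nonZeroDivisors (𝓞 K)) (ηK : K) = 1 := by
        have h3 : (ηK : K) = algebraMap (𝓞 K) K (algebraMap (𝓞 F) (𝓞 K) η) :=
          IsScalarTower.algebraMap_apply (𝓞 F) (𝓞 K) K _
        rw [h3, ← FractionalIdeal.coeIdeal_span_singleton,
          Ideal.span_singleton_eq_top.2 (η.isUnit.map _), FractionalIdeal.coeIdeal_top]
      refine ⟨α (r g') * (α (r g))⁻¹ * ηK, ?_, ?_⟩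
      · rw [hα (r g'), hα (r g), hbb, ← mul_assoc, Units.val_mul, Units.val_mul,
          ← FractionalIdeal.spanSingleton_mul_spanSingleton, hηspan, mul_one,
          FractionalIdeal.spanSingleton_mul_spanSingleton, ← Units.val_mul, ← Units.val_mul,
          inv_mul_cancel_right]
      · have h3 : (α (r g) : K) ≠ 0 := (α (r g)).ne_zero
        have h4 : c (α (r g) : K) ≠ 0 := (map_ne_zero c).2 h3
        rw [hε (r g'), hε (r g), hbb, hεη]
        simp only [Units.val_mul, Units.val_pow_eq_pow_val, map_mul, map_pow, hN,
          Units.val_inv_eq_inv_val, map_inv₀, hηF, AlgEquiv.commutes]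
        field_simp
    refine (Nat.card_le_card_of_injective φ hφ).trans ?_
    rw [Nat.card_prod]
    exact Nat.mul_le_mul_left _ (hd ▸ hunits)
  have hF : (0 : ℝ) < classNumber F := by exact_mod_cast classNumber_pos F
  rw [← mul_div_assoc, le_div_iff₀ hF]
  have h1 : Nat.card G * classNumber F ≤ 2 ^ (d + 1) * classNumber K :=
    calc Nat.card G * classNumber F ≤ Nat.card (classNorm F K).ker * 2 ^ d * classNumber F :=
          Nat.mul_le_mul_right _ hcard
      _ = 2 ^ d * (Nat.card (classNorm F K).ker * classNumber F) := by ring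
      _ ≤ 2 ^ d * (2 * classNumber K) := Nat.mul_le_mul_left _ hker
      _ = _ := by ring
  exact_mod_cast h1
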